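/- Over F = ℚ(q,x,y), with x and y independent indeterminates, the R-matrix satisfies the Yang–Baxter equation R̄_{12}(x) · R̄_{13}(xy) · R̄_{23}(y) = R̄_{23}(y) · R̄_{13}(xy) · R̄_{12}(x) in End(V ⊗ V ⊗ V). -/

import Mathlib

/-!
The proof is Baxterization. With `P` the flip and `z = q - q⁻¹`, the operator `P R̄(u)` is
`((q u - q⁻¹)(u - ξ))⁻¹` times

  `z (u - ξ) + (u - 1) (u - ξ) T - z ξ (u - 1) E`

(`Rbar_eq`). Here `T` is the constant braid operator `q P R̄(∞)`, and `E = w wᵗ` has rank one, with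
`w = ∑ q^{ī} e_i ⊗ e_{i′}`. Relabelling tensor factors (`yb_left`, `yb_right`) turns the Yang–Baxter
equation into its braid form, with `Ř₂₃(x) Ř₁₂(xy) Ř₂₃(y)` on one side. That identity holds in any
algebra in which `T₁, T₂, E₁, E₂` satisfy the Birman–Murakami–Wenzl relations with `ν = q^{1-2n}`
and `ξ = -q⁻¹ ν` (`bmw_baxter`), so it remains to verify these relations.

* The quadratic relation `T² = 1 + z T - z ν E` and `T E = E T = ν E` reduce, on the span of the
  `e_i ⊗ e_{i′}`, to geometric sums of the weights `q^{2ī}` (`sum_cWt_sq`, `tEnt_tail`).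
* The mixed relations between `T₁, E₂` and `T₂, E₁` come from the skein identity `skein_w` for the
  vectors `w ⊗ e_a` and `e_a ⊗ w`.
* For the braid relation, the relations above show that the kernel of
  `T₁ T₂ T₁ - T₂ T₁ T₂` is stable under `T₁` and `T₂` (`braidDefect_T12`, `braidDefect_T23`). Hence
  it suffices to treat one ordering of each triple of indices. The symmetry
  `(a, b, c) ↦ (c′, b′, a′)` (`BraidOn.rev`) reduces this further. Triples without two mutually
  primed indices behave as in type `A` (`braidOn_generic`). For triples containing `m, m′` with
  `m < m′`, the correction terms in `T (e_m ⊗ e_{m′})` involve only pairs `i, i′` with `i′ < m`, so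
  an induction on `m` (`braidOn_pair`) reduces to the explicit computations `braidOn_between`,
  `braidOn_double` and `braidOn_below`.
-/

noncomputable section

open Matrix Kronecker

/-- `primeIdx n i` is the 0-based version of the primed index `i′ = 2n+1−i` (1-based). -/
def primeIdx (n : ℕ) (i : Fin (2*n)) : Fin (2*n) :=
  ⟨2*n - 1 - i.val, by have := i.isLt; omega⟩

/-- `barIdx n i` is `ī`: `n−i` for `1 ≤ i ≤ n` and `n+1−i` for `n+1 ≤ i ≤ 2n` (1-based). -/
def barIdx (n : ℕ) (i : Fin (2*n)) : ℤ :=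
  if i.val < n then (n : ℤ) - 1 - i.val else (n : ℤ) - i.val

/-- `ξ = −q^{−2n}`. -/
def xiVal {F : Type*} [Field F] (n : ℕ) (q : F) : F := -q ^ (-(2 * (n : ℤ)))

/-- The entries `a_{ij}(u)` of the exceptional block of the R-matrix. -/
def aEnt {F : Type*} [Field F] (n : ℕ) (q xi u : F) (i j : Fin (2*n)) : F :=
  if i = j then (q ^ (-2 : ℤ) * u - xi) * (u - 1)
  else if i.val < j.val then
    (q ^ (-2 : ℤ) - 1) *
      (q ^ (barIdx n i - barIdx n j) * xi * (u - 1)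
        - (if i = primeIdx n j then (1 : F) else 0) * (u - xi))
  else
    (q ^ (-2 : ℤ) - 1) * u *
      (q ^ (barIdx n i - barIdx n j) * (u - 1)
        - (if i = primeIdx n j then (1 : F) else 0) * (u - xi))

/-- The R-matrix `R̄(u)` of type `A^{(2)}_{2n−1}` (with the parameter `ξ` explicit). -/
def Rbar {F : Type*} [Field F] (n : ℕ) (q xi u : F) :
    Matrix (Fin (2*n) × Fin (2*n)) (Fin (2*n) × Fin (2*n)) F :=
  fun p r =>
    (if p.1 = p.2 ∧ p.1 = r.1 ∧ p.1 = r.2 then (1 : F) else 0)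
    + (if p.1 = r.1 ∧ p.2 = r.2 ∧ p.1 ≠ p.2 ∧ p.1 ≠ primeIdx n p.2 then
        (u - 1) / (q * u - q⁻¹) else 0)
    + (if p.1 = r.2 ∧ p.2 = r.1 ∧ p.2.val < p.1.val ∧ p.1 ≠ primeIdx n p.2 then
        (q - q⁻¹) / (q * u - q⁻¹) else 0)
    + (if p.1 = r.2 ∧ p.2 = r.1 ∧ p.1.val < p.2.val ∧ p.1 ≠ primeIdx n p.2 then
        (q - q⁻¹) * u / (q * u - q⁻¹) else 0)
    + (if p.1 = primeIdx n p.2 ∧ r.1 = primeIdx n r.2 then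
        aEnt n q xi u p.2 r.2 / ((u - q ^ (-2 : ℤ)) * (u - xi)) else 0)

/-- Primed partial transpose in the first tensor factor. -/
def pt1 {F : Type*} [Field F] (n : ℕ)
    (X : Matrix (Fin (2*n) × Fin (2*n)) (Fin (2*n) × Fin (2*n)) F) :
    Matrix (Fin (2*n) × Fin (2*n)) (Fin (2*n) × Fin (2*n)) F :=
  fun p r => X (primeIdx n r.1, p.2) (primeIdx n p.1, r.2)

/-- `X_{12}` acting on the triple tensor product. -/
def op12 {F : Type*} [Field F] (n : ℕ)
    (X : Matrix (Fin (2*n) × Fin (2*n)) (Fin (2*n) × Fin (2*n)) F) :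
    Matrix (Fin (2*n) × Fin (2*n) × Fin (2*n)) (Fin (2*n) × Fin (2*n) × Fin (2*n)) F :=
  fun p r => X (p.1, p.2.1) (r.1, r.2.1) * (if p.2.2 = r.2.2 then 1 else 0)

/-- `X_{13}` acting on the triple tensor product. -/
def op13 {F : Type*} [Field F] (n : ℕ)
    (X : Matrix (Fin (2*n) × Fin (2*n)) (Fin (2*n) × Fin (2*n)) F) :
    Matrix (Fin (2*n) × Fin (2*n) × Fin (2*n)) (Fin (2*n) × Fin (2*n) × Fin (2*n)) F :=
  fun p r => X (p.1, p.2.2) (r.1, r.2.2) * (if p.2.1 = r.2.1 then 1 else 0)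

/-- `X_{23}` acting on the triple tensor product. -/
def op23 {F : Type*} [Field F] (n : ℕ)
    (X : Matrix (Fin (2*n) × Fin (2*n)) (Fin (2*n) × Fin (2*n)) F) :
    Matrix (Fin (2*n) × Fin (2*n) × Fin (2*n)) (Fin (2*n) × Fin (2*n) × Fin (2*n)) F :=
  fun p r => (if p.1 = r.1 then 1 else 0) * X (p.2.1, p.2.2) (r.2.1, r.2.2)

/-! ### Baxterization of the Birman–Murakami–Wenzl algebra -/

/-- The BMW relations imply the braid form of the Yang–Baxter equation for
`R(u) = z (u + q⁻¹ν) + (u - 1) (u + q⁻¹ν) T + z q⁻¹ν (u - 1) E`. Both sides are expanded into reduced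
words; the coefficients agree identically except where `δ` enters, and there `hδ` is needed. -/
theorem bmw_baxter {F A : Type*} [Field F] [Ring A] [Algebra F A] (T₁ T₂ E₁ E₂ : A)
    (q z ν δ x y : F) (hq : q ≠ 0) (hz : z = q - q⁻¹) (hν : ν ≠ 0)
    (hδ : z * δ = z + ν⁻¹ - ν)
    (sq₁ : T₁ * T₁ = 1 + z • T₁ - (z * ν) • E₁) (sq₂ : T₂ * T₂ = 1 + z • T₂ - (z * ν) • E₂)
    (te₁ : T₁ * E₁ = ν • E₁) (te₂ : T₂ * E₂ = ν • E₂)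
    (et₁ : E₁ * T₁ = ν • E₁) (et₂ : E₂ * T₂ = ν • E₂)
    (ee₁ : E₁ * E₁ = δ • E₁) (ee₂ : E₂ * E₂ = δ • E₂)
    (eee₁ : E₁ * E₂ * E₁ = E₁) (eee₂ : E₂ * E₁ * E₂ = E₂)
    (tee₁ : T₁ * E₂ * E₁ = T₂ * E₁ + z • (E₂ * E₁) - z • E₁)
    (tee₂ : T₂ * E₁ * E₂ = T₁ * E₂ + z • (E₁ * E₂) - z • E₂)
    (eet₁ : E₁ * E₂ * T₁ = E₁ * T₂ + z • (E₁ * E₂) - z • E₁)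
    (eet₂ : E₂ * E₁ * T₂ = E₂ * T₁ + z • (E₂ * E₁) - z • E₂)
    (tte₁ : T₁ * T₂ * E₁ = E₂ * E₁) (tte₂ : T₂ * T₁ * E₂ = E₁ * E₂)
    (ett₁ : E₁ * T₂ * T₁ = E₁ * E₂) (ett₂ : E₂ * T₁ * T₂ = E₂ * E₁)
    (braid : T₁ * T₂ * T₁ = T₂ * T₁ * T₂) (R₁ R₂ : F → A)
    (hR₁ : ∀ u, R₁ u = (z * (u + q⁻¹ * ν)) • (1 : A) + ((u - 1) * (u + q⁻¹ * ν)) • T₁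
        + (z * (q⁻¹ * ν) * (u - 1)) • E₁)
    (hR₂ : ∀ u, R₂ u = (z * (u + q⁻¹ * ν)) • (1 : A) + ((u - 1) * (u + q⁻¹ * ν)) • T₂
        + (z * (q⁻¹ * ν) * (u - 1)) • E₂) :
    R₂ x * R₁ (x * y) * R₂ y = R₁ y * R₂ (x * y) * R₁ x := by
  have ete₁ : E₁ * T₂ * E₁ = ν⁻¹ • E₁ := by
    have h := congrArg (E₁ * ·) tee₁
    simp only [mul_sub, mul_add, mul_smul_comm, ← mul_assoc, et₁, ee₁, eee₁, smul_mul_assoc] at h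
    have h2 : E₁ * T₂ * E₁ = (ν - z + z * δ) • E₁ := by
      linear_combination (norm := module) -h
    rw [h2, hδ]; module
  have ete₂ : E₂ * T₁ * E₂ = ν⁻¹ • E₂ := by
    have h := congrArg (E₂ * ·) tee₂
    simp only [mul_sub, mul_add, mul_smul_comm, ← mul_assoc, et₂, ee₂, eee₂, smul_mul_assoc] at h
    have h2 : E₂ * T₁ * E₂ = (ν - z + z * δ) • E₂ := by
      linear_combination (norm := module) -h
    rw [h2, hδ]; module
  have tet : T₂ * E₁ * T₂ = T₁ * E₂ * T₁ - z • (T₁ * E₂ + E₂ * T₁) + z • (T₂ * E₁ + E₁ * T₂)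
      + (z * z) • (E₂ - E₁) := by
    have h1 : T₂ * E₁ = T₁ * E₂ * E₁ - z • (E₂ * E₁) + z • E₁ := by rw [tee₁]; module
    have h2 : T₂ * E₁ * T₂ = T₁ * (E₂ * E₁ * T₂) - z • (E₂ * E₁ * T₂) + z • (E₁ * T₂) := by
      conv_lhs => rw [h1]
      simp only [add_mul, sub_mul, smul_mul_assoc, mul_assoc]
    rw [h2, eet₂]
    simp only [mul_sub, mul_add, mul_smul_comm, ← mul_assoc, tee₁]
    module
  obtain ⟨α, hα⟩ : ∃ α : F → F, ∀ u, α u = z * (u + q⁻¹ * ν) := ⟨_, fun _ => rfl⟩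
  obtain ⟨β, hβ⟩ : ∃ β : F → F, ∀ u, β u = (u - 1) * (u + q⁻¹ * ν) := ⟨_, fun _ => rfl⟩
  obtain ⟨γ, hγ⟩ : ∃ γ : F → F, ∀ u, γ u = z * (q⁻¹ * ν) * (u - 1) := ⟨_, fun _ => rfl⟩
  simp only [← hα, ← hβ, ← hγ] at hR₁ hR₂
  rw [hR₁, hR₁, hR₁, hR₂, hR₂, hR₂]
  simp only [mul_add, add_mul, smul_mul_assoc, mul_smul_comm, mul_one, one_mul, smul_smul,
    tet, ete₁, ete₂, braid, tte₁, tte₂, ett₁, ett₂, tee₁, tee₂, eet₁, eet₂, eee₁, eee₂, ee₁, ee₂,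
    et₁, et₂, te₁, te₂, sq₁, sq₂, smul_add, smul_sub]
  have hγδ : ∀ u, γ u * δ = q⁻¹ * ν * (u - 1) * (z + ν⁻¹ - ν) := fun u => by
    rw [hγ, ← hδ]; ring
  match_scalars
  all_goals try (simp only [hα, hβ, hγ]; ring1)
  · have h := congrArg (fun t => γ y * α (x * y) * t) (hγδ x)
    simp only [hα, hβ, hγ, hz] at h ⊢
    field_simp at h ⊢
    linear_combination h
  · have h := congrArg (fun t => γ x * α (x * y) * t) (hγδ y)
    simp only [hα, hβ, hγ, hz] at h ⊢
    field_simp at h ⊢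
    linear_combination -h

/-! ### Indices and the weights of the invariant vector -/

lemma primeIdx_primeIdx (n : ℕ) (i : Fin (2*n)) : primeIdx n (primeIdx n i) = i := by
  ext; simp only [primeIdx]; omega

lemma primeIdx_ne (n : ℕ) (i : Fin (2*n)) : primeIdx n i ≠ i := by
  simp only [primeIdx, ne_eq, Fin.ext_iff]; omega

lemma primeIdx_inj (n : ℕ) (i j : Fin (2*n)) : primeIdx n i = primeIdx n j ↔ i = j :=
  ⟨fun h => by rw [← primeIdx_primeIdx n i, h, primeIdx_primeIdx], fun h => by rw [h]⟩

lemma primeIdx_lt (n : ℕ) (i j : Fin (2*n)) : primeIdx n i < primeIdx n j ↔ j < i := by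
  simp only [primeIdx, Fin.lt_def]; omega

lemma primeIdx_lt_comm (n : ℕ) (i j : Fin (2*n)) : primeIdx n i < j ↔ primeIdx n j < i := by
  simp only [primeIdx, Fin.lt_def]; omega

lemma eq_primeIdx_comm (n : ℕ) (i j : Fin (2*n)) : i = primeIdx n j ↔ j = primeIdx n i := by
  simp only [primeIdx, Fin.ext_iff]; omega

lemma barIdx_primeIdx (n : ℕ) (i : Fin (2*n)) : barIdx n (primeIdx n i) = -barIdx n i := by
  have := i.isLt
  simp only [barIdx, primeIdx]
  split_ifs <;> omega

/-- The weight `q^{ī}` with which `e_i ⊗ e_{i′}` occurs in the invariant vector. -/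
def cWt {F : Type*} [Field F] (n : ℕ) (q : F) (i : Fin (2*n)) : F := q ^ barIdx n i

/-- The eigenvalue `ν = q^{1−2n}` of the braid operator on the invariant vector. -/
def nuVal {F : Type*} [Field F] (n : ℕ) (q : F) : F := q ^ (1 - 2 * (n : ℤ))

section weights

variable {F : Type*} [Field F] (n : ℕ) (q : F)

lemma cWt_ne (hq : q ≠ 0) (i : Fin (2*n)) : cWt n q i ≠ 0 := zpow_ne_zero _ hq

lemma cWt_primeIdx (i : Fin (2*n)) : cWt n q (primeIdx n i) = (cWt n q i)⁻¹ := by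
  rw [cWt, cWt, barIdx_primeIdx, _root_.zpow_neg]

/-- The partial geometric sums of the squared weights. -/
lemma sum_cWt_sq (hq : q ≠ 0) (k : Fin (2*n)) :
    (q - q⁻¹) * ∑ i with k < i, cWt n q i ^ 2
      = q⁻¹ * cWt n q k ^ 2 - nuVal n q + if k < primeIdx n k then q - q⁻¹ else 0 := by
  obtain ⟨j, hj⟩ : ∃ j : ℕ, j + k.val + 1 = 2 * n := ⟨2 * n - 1 - k.val, by omega⟩
  induction j generalizing k with
  | zero =>
    have h1 : (Finset.univ.filter fun i : Fin (2*n) => k < i) = ∅ := by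
      ext i; simp only [Finset.mem_filter, Finset.mem_univ, true_and, Finset.notMem_empty,
        iff_false, Fin.lt_def]; omega
    have h2 : ¬ k < primeIdx n k := by simp only [primeIdx, Fin.lt_def]; omega
    have h3 : barIdx n k = 1 - n := by simp only [barIdx]; split_ifs <;> omega
    rw [h1, if_neg h2, cWt, h3, nuVal, ← zpow_natCast, ← _root_.zpow_mul, ← _root_.zpow_neg_one, ← zpow_add₀ hq]
    simp only [Finset.sum_empty, mul_zero, add_zero]
    rw [eq_comm, sub_eq_zero]
    congr 1
    push_cast
    ring
  | succ j ih =>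
    let k' : Fin (2*n) := ⟨k.val + 1, by omega⟩
    have h1 : (Finset.univ.filter fun i : Fin (2*n) => k < i)
        = insert k' (Finset.univ.filter fun i : Fin (2*n) => k' < i) := by
      ext i
      simp only [Finset.mem_filter, Finset.mem_univ, true_and, Finset.mem_insert, Fin.lt_def,
        Fin.ext_iff, k']
      omega
    have h2 := ih k' (by simp only [k']; omega)
    rw [h1, Finset.sum_insert (by simp), mul_add, h2]
    by_cases hk : k.val + 1 = n
    · have h3 : barIdx n k = 0 := by simp only [barIdx]; split_ifs <;> omega
      have h4 : barIdx n k' = 0 := by simp only [barIdx, k']; split_ifs <;> omega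
      have h5 : k < primeIdx n k := by simp only [primeIdx, Fin.lt_def]; omega
      have h6 : ¬ k' < primeIdx n k' := by simp only [primeIdx, Fin.lt_def, k']; omega
      rw [if_pos h5, if_neg h6, cWt, cWt, h3, h4]
      simp
    · have h3 : barIdx n k = barIdx n k' + 1 := by simp only [barIdx, k']; split_ifs <;> omega
      have h5 : k < primeIdx n k ↔ k' < primeIdx n k' := by
        simp only [primeIdx, Fin.lt_def, k']; omega
      have h6 : cWt n q k = cWt n q k' * q := by rw [cWt, cWt, h3, zpow_add_one₀ hq]
      simp only [h5, h6]
      field_simp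
      ring

/-- The matrix of the braid operator in the basis `e_i ⊗ e_{i′}` of the weight-zero space. -/
def tEnt (i k : Fin (2*n)) : F :=
  (if i = primeIdx n k then q⁻¹ else 0)
    + (if i = k then (if primeIdx n k < k then q - q⁻¹ else 0) else 0)
    - (if primeIdx n k < i then (q - q⁻¹) * (cWt n q i * cWt n q k) else 0)

lemma tEnt_symm (i k : Fin (2*n)) : tEnt n q i k = tEnt n q k i := by
  simp only [tEnt, primeIdx_lt_comm n k i, eq_primeIdx_comm n i k, mul_comm (cWt n q i)]
  by_cases h : i = k
  · subst h; rfl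
  · rw [if_neg h, if_neg (Ne.symm h)]

/-- The action of `tEnt` on a tail `∑_{l > m} c_l e_l ⊗ e_{l′}` of the invariant vector. -/
lemma tEnt_tail (hq : q ≠ 0) (m k : Fin (2*n)) :
    ∑ l with m < l, cWt n q l * tEnt n q k l
      = if m < primeIdx n k then nuVal n q * cWt n q k
        else (if primeIdx n k < k ∧ m < k then (q - q⁻¹) * cWt n q k else 0)
          - cWt n q k * (q⁻¹ * cWt n q m ^ 2 - nuVal n q
              + if m < primeIdx n m then q - q⁻¹ else 0) := by
  have hc := cWt_ne n q hq k
  have e1 : ∑ l with m < l, cWt n q l * tEnt n q k l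
      = (if m < primeIdx n k then cWt n q (primeIdx n k) * q⁻¹ else 0)
        + (if m < k then (if primeIdx n k < k then (q - q⁻¹) * cWt n q k else 0) else 0)
        - cWt n q k * ((q - q⁻¹) * ∑ l with m < l ∧ primeIdx n k < l, cWt n q l ^ 2) := by
    simp only [Finset.sum_filter, Finset.mul_sum, tEnt_symm n q k]
    have a1 : (if m < primeIdx n k then cWt n q (primeIdx n k) * q⁻¹ else 0)
        = ∑ l, if l = primeIdx n k then (if m < l then cWt n q l * q⁻¹ else 0) else 0 := by
      rw [Finset.sum_ite_eq' Finset.univ]; simp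
    have a2 : (if m < k then (if primeIdx n k < k then (q - q⁻¹) * cWt n q k else 0) else 0)
        = ∑ l, if l = k then (if m < l then (if primeIdx n k < k then (q - q⁻¹) * cWt n q l
            else 0) else 0) else 0 := by
      rw [Finset.sum_ite_eq' Finset.univ]; simp
    rw [a1, a2, ← Finset.sum_add_distrib, ← Finset.sum_sub_distrib]
    refine Finset.sum_congr rfl fun l _ => ?_
    simp only [tEnt]
    split_ifs <;> first | ring1 | (exfalso; tauto)
  rw [e1]
  by_cases h : m < primeIdx n k
  · have h1 : (Finset.univ.filter fun l => m < l ∧ primeIdx n k < l)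
        = Finset.univ.filter fun l => primeIdx n k < l := by
      ext l; simp only [Finset.mem_filter, Finset.mem_univ, true_and]
      exact ⟨fun h => h.2, fun h' => ⟨h.trans h', h'⟩⟩
    rw [h1, sum_cWt_sq n q hq, primeIdx_primeIdx, cWt_primeIdx, if_pos h, if_pos h]
    by_cases h2 : primeIdx n k < k
    · rw [if_pos (h.trans h2), if_pos h2, if_pos h2]; field_simp; ring
    · rw [if_neg h2, if_neg h2]; simp only [ite_self]; field_simp; ring
  · have h1 : (Finset.univ.filter fun l => m < l ∧ primeIdx n k < l)
        = Finset.univ.filter fun l => m < l := by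
      ext l; simp only [Finset.mem_filter, Finset.mem_univ, true_and]
      exact ⟨fun h => h.1, fun h' => ⟨h', (not_lt.mp h).trans_lt h'⟩⟩
    rw [h1, sum_cWt_sq n q hq, if_neg h, if_neg h]
    split_ifs <;> first | ring1 | (exfalso; tauto)

lemma tEnt_sq (hq : q ≠ 0) (i k : Fin (2*n)) :
    ∑ l, tEnt n q i l * tEnt n q l k
      = (if i = k then 1 else 0) + (q - q⁻¹) * tEnt n q i k
        - (q - q⁻¹) * nuVal n q * (cWt n q i * cWt n q k) := by
  have e1 : ∑ l, tEnt n q i l * tEnt n q l k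
      = q⁻¹ * tEnt n q i (primeIdx n k)
        + (if primeIdx n k < k then (q - q⁻¹) * tEnt n q i k else 0)
        - (q - q⁻¹) * cWt n q k * ∑ l with primeIdx n k < l, cWt n q l * tEnt n q i l := by
    have a1 : q⁻¹ * tEnt n q i (primeIdx n k)
        = ∑ l, if l = primeIdx n k then q⁻¹ * tEnt n q i l else 0 := by
      rw [Finset.sum_ite_eq' Finset.univ]; simp
    have a2 : (if primeIdx n k < k then (q - q⁻¹) * tEnt n q i k else 0)
        = ∑ l, if l = k then (if primeIdx n k < k then (q - q⁻¹) * tEnt n q i l else 0) else 0 := by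
      rw [Finset.sum_ite_eq' Finset.univ]; simp
    rw [a1, a2, ← Finset.sum_add_distrib, Finset.sum_filter, Finset.mul_sum,
      ← Finset.sum_sub_distrib]
    refine Finset.sum_congr rfl fun l _ => ?_
    generalize tEnt n q i l = t
    rw [tEnt]
    split_ifs <;> ring1
  rw [e1, tEnt_tail n q hq, cWt_primeIdx]
  have hc := cWt_ne n q hq k
  have hi := cWt_ne n q hq i
  simp only [tEnt, primeIdx_primeIdx, cWt_primeIdx, primeIdx_lt, ite_and]
  have hne := primeIdx_ne n k
  rcases lt_trichotomy i k with h | h | h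
  · simp only [h, h.ne, h.not_gt, if_true, if_false]
    split_ifs <;> first | (exfalso; order) | (field_simp; ring1)
  · subst h
    simp only [lt_irrefl, if_true, if_false, hne.symm]
    split_ifs <;> first | (exfalso; order) | (field_simp; ring1)
  · have hlt := (primeIdx_lt n i k).2 h
    simp only [h, h.ne', h.not_gt, if_true, if_false]
    split_ifs <;> first | (exfalso; order) | (field_simp; ring1)

lemma tEnt_mul_cWt (hq : q ≠ 0) (i : Fin (2*n)) :
    ∑ l, tEnt n q i l * cWt n q l = nuVal n q * cWt n q i := by
  have hi := cWt_ne n q hq i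
  have e1 : ∑ l, tEnt n q i l * cWt n q l
      = cWt n q (primeIdx n i) * q⁻¹ + (if primeIdx n i < i then (q - q⁻¹) * cWt n q i else 0)
        - cWt n q i * ((q - q⁻¹) * ∑ l with primeIdx n i < l, cWt n q l ^ 2) := by
    simp only [Finset.sum_filter, Finset.mul_sum, tEnt_symm n q i]
    have a1 : cWt n q (primeIdx n i) * q⁻¹
        = ∑ l, if l = primeIdx n i then cWt n q l * q⁻¹ else 0 := by
      rw [Finset.sum_ite_eq' Finset.univ]; simp
    have a2 : (if primeIdx n i < i then (q - q⁻¹) * cWt n q i else 0)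
        = ∑ l, if l = i then (if primeIdx n i < i then (q - q⁻¹) * cWt n q l else 0) else 0 := by
      rw [Finset.sum_ite_eq' Finset.univ]; simp
    rw [a1, a2, ← Finset.sum_add_distrib, ← Finset.sum_sub_distrib]
    refine Finset.sum_congr rfl fun l _ => ?_
    simp only [tEnt]
    split_ifs <;> ring1
  rw [e1, sum_cWt_sq n q hq, primeIdx_primeIdx, cWt_primeIdx]
  split_ifs <;> field_simp <;> ring

/-- The value of `δ = ∑ q^{2ī}`, the norm of the invariant vector. -/
lemma delta_eq (hq : q ≠ 0) (hn : 2 ≤ n) :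
    (q - q⁻¹) * ∑ i : Fin (2*n), cWt n q i ^ 2
      = (q - q⁻¹) + (nuVal n q)⁻¹ - nuVal n q := by
  have hν : nuVal n q ≠ 0 := zpow_ne_zero _ hq
  let i : Fin (2*n) := ⟨0, by omega⟩
  have hi := cWt_ne n q hq i
  -- compare the two evaluations of `t² c` at one coordinate
  have h1 : ∑ k, (∑ l, tEnt n q i l * tEnt n q l k) * cWt n q k = nuVal n q ^ 2 * cWt n q i := by
    simp only [Finset.sum_mul, mul_assoc]
    rw [Finset.sum_comm]
    simp only [← Finset.mul_sum, tEnt_mul_cWt n q hq, mul_left_comm _ (nuVal n q)]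
    ring
  have h2 : ∑ k, (∑ l, tEnt n q i l * tEnt n q l k) * cWt n q k
      = cWt n q i + (q - q⁻¹) * (nuVal n q * cWt n q i)
        - (q - q⁻¹) * nuVal n q * cWt n q i * ∑ k, cWt n q k ^ 2 := by
    simp only [tEnt_sq n q hq, add_mul, sub_mul _ _ (cWt n q _), Finset.sum_add_distrib,
      Finset.sum_sub_distrib, ite_mul, one_mul, zero_mul, Finset.sum_ite_eq, Finset.mem_univ,
      if_true, mul_assoc, ← Finset.mul_sum, tEnt_mul_cWt n q hq]
    simp only [pow_two]
  have h3 := h1.symm.trans h2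
  apply mul_left_cancel₀ (mul_ne_zero hν hi)
  field_simp at h3 ⊢
  linear_combination h3

end weights

/-! ### The braid operator and the rank-one operator of the invariant vector -/

section operators

variable {F : Type*} [Field F] (n : ℕ) (q : F)

/-- The braid operator `T` on `V ⊗ V`. It is `q P R̄(∞)` with `P` the flip. -/
def Tmat : Matrix (Fin (2*n) × Fin (2*n)) (Fin (2*n) × Fin (2*n)) F :=
  fun p r =>
    if r.2 = primeIdx n r.1 then (if p.2 = primeIdx n p.1 then tEnt n q p.1 r.1 else 0)
    else if r.1 = r.2 then (if p = r then q else 0)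
    else (if p = (r.2, r.1) then 1 else 0)
      + (if p = r then (if r.2 < r.1 then q - q⁻¹ else 0) else 0)

/-- The operator `E = w wᵗ`, where `w = ∑ q^{ī} e_i ⊗ e_{i′}` is the invariant vector. -/
def Emat : Matrix (Fin (2*n) × Fin (2*n)) (Fin (2*n) × Fin (2*n)) F :=
  fun p r => if p.2 = primeIdx n p.1 ∧ r.2 = primeIdx n r.1 then cWt n q p.1 * cWt n q r.1 else 0

variable {n}

/-- The basis vector `e_a ⊗ e_b`. -/
def e2 (F : Type*) [Field F] (a b : Fin (2*n)) : Fin (2*n) × Fin (2*n) → F :=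
  Pi.single (a, b) 1

/-- The basis vector `e_a ⊗ e_b ⊗ e_c`. -/
def e3 (F : Type*) [Field F] (a b c : Fin (2*n)) : Fin (2*n) × Fin (2*n) × Fin (2*n) → F :=
  Pi.single (a, b, c) 1

/-- Tensoring a vector of `V ⊗ V` with `e_c` on the right. -/
def lift12 (c : Fin (2*n)) :
    (Fin (2*n) × Fin (2*n) → F) →ₗ[F] (Fin (2*n) × Fin (2*n) × Fin (2*n) → F) where
  toFun v p := if p.2.2 = c then v (p.1, p.2.1) else 0
  map_add' v w := by ext p; by_cases h : p.2.2 = c <;> simp [h]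
  map_smul' v w := by ext p; by_cases h : p.2.2 = c <;> simp [h]

/-- Tensoring a vector of `V ⊗ V` with `e_a` on the left. -/
def lift23 (a : Fin (2*n)) :
    (Fin (2*n) × Fin (2*n) → F) →ₗ[F] (Fin (2*n) × Fin (2*n) × Fin (2*n) → F) where
  toFun v p := if p.1 = a then v p.2 else 0
  map_add' v w := by ext p; by_cases h : p.1 = a <;> simp [h]
  map_smul' v w := by ext p; by_cases h : p.1 = a <;> simp [h]

lemma lift12_e2 (a b c : Fin (2*n)) : lift12 c (e2 F a b) = e3 F a b c := by
  ext ⟨p1, p2, p3⟩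
  simp only [lift12, e2, e3, LinearMap.coe_mk, AddHom.coe_mk, Pi.single_apply, Prod.mk.injEq]
  split_ifs <;> first | rfl | (exfalso; tauto)

lemma lift23_e2 (a b c : Fin (2*n)) : lift23 a (e2 F b c) = e3 F a b c := by
  ext ⟨p1, p2, p3⟩
  simp only [lift23, e2, e3, LinearMap.coe_mk, AddHom.coe_mk, Pi.single_apply, Prod.mk.injEq]
  split_ifs <;> first | rfl | (exfalso; tauto)

lemma op12_e3 (X : Matrix (Fin (2*n) × Fin (2*n)) (Fin (2*n) × Fin (2*n)) F)
    (a b c : Fin (2*n)) : op12 n X *ᵥ e3 F a b c = lift12 c (X *ᵥ e2 F a b) := by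
  ext p
  simp [e2, e3, lift12, op12]

lemma op23_e3 (X : Matrix (Fin (2*n) × Fin (2*n)) (Fin (2*n) × Fin (2*n)) F)
    (a b c : Fin (2*n)) : op23 n X *ᵥ e3 F a b c = lift23 a (X *ᵥ e2 F b c) := by
  ext p
  simp [e2, e3, lift23, op23]

lemma T_e2_prime (k : Fin (2*n)) :
    Tmat n q *ᵥ e2 F k (primeIdx n k) = ∑ i, tEnt n q i k • e2 F i (primeIdx n i) := by
  ext ⟨p1, p2⟩
  simp only [e2, Matrix.mulVec_single_one, Matrix.col_apply, Tmat, if_true, Finset.sum_apply,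
    Pi.smul_apply, Pi.single_apply, Prod.mk.injEq, smul_eq_mul, mul_ite, mul_one, mul_zero, ite_and,
    Finset.sum_ite_eq, Finset.mem_univ]

lemma E_e2_prime (k : Fin (2*n)) :
    Emat n q *ᵥ e2 F k (primeIdx n k)
      = ∑ i, (cWt n q i * cWt n q k) • e2 F i (primeIdx n i) := by
  ext ⟨p1, p2⟩
  simp only [e2, Matrix.mulVec_single_one, Matrix.col_apply, Emat, and_true, Finset.sum_apply,
    Pi.smul_apply, Pi.single_apply, Prod.mk.injEq, smul_eq_mul, mul_ite, mul_one, mul_zero, ite_and,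
    Finset.sum_ite_eq, Finset.mem_univ, if_true]

lemma E_e2_ne {a b : Fin (2*n)} (h : b ≠ primeIdx n a) : Emat n q *ᵥ e2 F a b = 0 := by
  ext ⟨p1, p2⟩
  simp [e2, Emat, h]

lemma T_e2_same (a : Fin (2*n)) : Tmat n q *ᵥ e2 F a a = q • e2 F a a := by
  ext ⟨p1, p2⟩
  simp [e2, Tmat, (primeIdx_ne n a).symm, Pi.single_apply]

lemma T_e2_ne {a b : Fin (2*n)} (h : b ≠ primeIdx n a) (hab : a ≠ b) :
    Tmat n q *ᵥ e2 F a b = e2 F b a + (if b < a then q - q⁻¹ else 0) • e2 F a b := by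
  ext ⟨p1, p2⟩
  by_cases h2 : b < a <;> simp [e2, Tmat, h, hab, Pi.single_apply, h2]

/-- The image of `e_k ⊗ e_{k′}`, with the tail `∑_{i > k′}` of the invariant vector split off. -/
lemma T_e2_prime' (k : Fin (2*n)) :
    Tmat n q *ᵥ e2 F k (primeIdx n k) = q⁻¹ • e2 F (primeIdx n k) k
      + (if primeIdx n k < k then q - q⁻¹ else 0) • e2 F k (primeIdx n k)
      - ((q - q⁻¹) * cWt n q k) • ∑ i with primeIdx n k < i, cWt n q i • e2 F i (primeIdx n i) := by
  have a1 : q⁻¹ • e2 F (primeIdx n k) k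
      = ∑ i, if i = primeIdx n k then q⁻¹ • e2 F i (primeIdx n i) else 0 := by
    rw [Finset.sum_ite_eq' Finset.univ]; simp [primeIdx_primeIdx]
  have a2 : (if primeIdx n k < k then q - q⁻¹ else 0) • e2 F k (primeIdx n k)
      = ∑ i, if i = k then (if primeIdx n k < k then q - q⁻¹ else 0) • e2 F i (primeIdx n i)
          else 0 := by
    rw [Finset.sum_ite_eq' Finset.univ]; simp
  rw [T_e2_prime, a1, a2, Finset.sum_filter, Finset.smul_sum, ← Finset.sum_add_distrib,
    ← Finset.sum_sub_distrib]
  refine Finset.sum_congr rfl fun i _ => ?_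
  simp only [tEnt]
  split_ifs <;> module

lemma ext_e2 {A B : Matrix (Fin (2*n) × Fin (2*n)) (Fin (2*n) × Fin (2*n)) F}
    (h : ∀ a b, A *ᵥ e2 F a b = B *ᵥ e2 F a b) : A = B :=
  Matrix.ext_of_mulVec_single fun p => h p.1 p.2

lemma ext_e3 {A B : Matrix (Fin (2*n) × Fin (2*n) × Fin (2*n))
      (Fin (2*n) × Fin (2*n) × Fin (2*n)) F}
    (h : ∀ a b c, A *ᵥ e3 F a b c = B *ᵥ e3 F a b c) : A = B :=
  Matrix.ext_of_mulVec_single fun p => h p.1 p.2.1 p.2.2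

variable (n)

lemma T_mul_T (hq : q ≠ 0) :
    Tmat n q * Tmat n q = 1 + (q - q⁻¹) • Tmat n q - ((q - q⁻¹) * nuVal n q) • Emat n q := by
  apply ext_e2
  intro a b
  simp only [← Matrix.mulVec_mulVec, Matrix.add_mulVec, Matrix.sub_mulVec, Matrix.smul_mulVec,
    Matrix.one_mulVec]
  by_cases hb : b = primeIdx n a
  · subst hb
    have a1 : e2 F a (primeIdx n a) = ∑ i, (if i = a then (1:F) else 0) • e2 F i (primeIdx n i) := by
      simp [ite_smul]
    rw [T_e2_prime, E_e2_prime]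
    conv_rhs => enter [1, 1]; rw [a1]
    simp only [Matrix.mulVec_sum, Matrix.mulVec_smul, T_e2_prime, Finset.smul_sum, smul_smul]
    rw [Finset.sum_comm, ← Finset.sum_add_distrib, ← Finset.sum_sub_distrib]
    refine Finset.sum_congr rfl fun i _ => ?_
    rw [← Finset.sum_smul, ← add_smul, ← sub_smul, ← tEnt_sq n q hq]
    congr 1
    exact Finset.sum_congr rfl fun l _ => mul_comm _ _
  · rw [E_e2_ne q hb]
    by_cases hab : a = b
    · subst hab
      rw [T_e2_same, Matrix.mulVec_smul, T_e2_same]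
      match_scalars
      field_simp
      ring
    · have hb' : a ≠ primeIdx n b := fun h => hb ((eq_primeIdx_comm n a b).1 h)
      rw [T_e2_ne q hb hab, Matrix.mulVec_add, Matrix.mulVec_smul, T_e2_ne q hb hab,
        T_e2_ne q hb' (Ne.symm hab)]
      rcases lt_or_gt_of_ne hab with h | h
      · simp only [h, h.not_gt, if_true, if_false]; module
      · simp only [h, h.not_gt, if_true, if_false]; module

lemma T_mul_E (hq : q ≠ 0) : Tmat n q * Emat n q = nuVal n q • Emat n q := by
  apply ext_e2
  intro a b
  simp only [← Matrix.mulVec_mulVec, Matrix.smul_mulVec]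
  by_cases hb : b = primeIdx n a
  · subst hb
    simp only [E_e2_prime, Matrix.mulVec_sum, Matrix.mulVec_smul, T_e2_prime, Finset.smul_sum,
      smul_smul]
    rw [Finset.sum_comm]
    refine Finset.sum_congr rfl fun i _ => ?_
    rw [← Finset.sum_smul, ← mul_assoc, ← tEnt_mul_cWt n q hq, Finset.sum_mul]
    congr 1
    exact Finset.sum_congr rfl fun l _ => by ring
  · simp only [E_e2_ne q hb, Matrix.mulVec_zero, smul_zero]

lemma E_mul_E : Emat n q * Emat n q = (∑ i, cWt n q i ^ 2) • Emat n q := by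
  apply ext_e2
  intro a b
  simp only [← Matrix.mulVec_mulVec, Matrix.smul_mulVec]
  by_cases hb : b = primeIdx n a
  · subst hb
    simp only [E_e2_prime, Matrix.mulVec_sum, Matrix.mulVec_smul, Finset.smul_sum,
      smul_smul]
    rw [Finset.sum_comm]
    refine Finset.sum_congr rfl fun i _ => ?_
    rw [← Finset.sum_smul, Finset.sum_mul]
    congr 1
    exact Finset.sum_congr rfl fun l _ => by ring
  · simp only [E_e2_ne q hb, Matrix.mulVec_zero, smul_zero]

lemma T_transpose : (Tmat n q)ᵀ = Tmat n q := by
  ext ⟨p1, p2⟩ ⟨r1, r2⟩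
  simp only [Matrix.transpose_apply, Tmat, Prod.mk.injEq, tEnt_symm n q r1]
  by_cases h : r2 = primeIdx n r1
  · by_cases h' : p2 = primeIdx n p1
    · simp [h, h']
    · have := primeIdx_ne n
      have := primeIdx_primeIdx n
      simp only [h, h', if_true, if_false]
      split_ifs <;> grind
  · by_cases h' : p2 = primeIdx n p1
    · have := primeIdx_ne n
      have := primeIdx_primeIdx n
      simp only [h, h', if_true, if_false]
      split_ifs <;> grind
    · simp only [h, h', if_false]
      split_ifs <;> grind

lemma E_transpose : (Emat n q)ᵀ = Emat n q := by
  ext p r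
  simp only [Matrix.transpose_apply, Emat, and_comm, mul_comm]

lemma op12_transpose (X : Matrix (Fin (2*n) × Fin (2*n)) (Fin (2*n) × Fin (2*n)) F) :
    (op12 n X)ᵀ = op12 n Xᵀ := by
  ext p r
  simp only [Matrix.transpose_apply, op12, eq_comm]

lemma op23_transpose (X : Matrix (Fin (2*n) × Fin (2*n)) (Fin (2*n) × Fin (2*n)) F) :
    (op23 n X)ᵀ = op23 n Xᵀ := by
  ext p r
  simp only [Matrix.transpose_apply, op23, eq_comm]

lemma op12_mul (X Y : Matrix (Fin (2*n) × Fin (2*n)) (Fin (2*n) × Fin (2*n)) F) :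
    op12 n (X * Y) = op12 n X * op12 n Y := by
  ext p r
  simp only [op12, Matrix.mul_apply, Fintype.sum_prod_type]
  simp

lemma op23_mul (X Y : Matrix (Fin (2*n) × Fin (2*n)) (Fin (2*n) × Fin (2*n)) F) :
    op23 n (X * Y) = op23 n X * op23 n Y := by
  ext p r
  simp only [op23, Matrix.mul_apply, Fintype.sum_prod_type]
  simp [Finset.mul_sum]

lemma op12_one : op12 n (1 : Matrix (Fin (2*n) × Fin (2*n)) (Fin (2*n) × Fin (2*n)) F) = 1 := by
  ext ⟨a, b, c⟩ ⟨a', b', c'⟩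
  simp only [op12, Matrix.one_apply, Prod.mk.injEq]
  split_ifs <;> first | (exfalso; tauto) | simp

lemma op23_one : op23 n (1 : Matrix (Fin (2*n) × Fin (2*n)) (Fin (2*n) × Fin (2*n)) F) = 1 := by
  ext ⟨a, b, c⟩ ⟨a', b', c'⟩
  simp only [op23, Matrix.one_apply, Prod.mk.injEq]
  split_ifs <;> first | (exfalso; tauto) | simp

lemma op12_add (X Y : Matrix (Fin (2*n) × Fin (2*n)) (Fin (2*n) × Fin (2*n)) F) :
    op12 n (X + Y) = op12 n X + op12 n Y := by
  ext p r
  simp only [op12, Matrix.add_apply, add_mul]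

lemma op23_add (X Y : Matrix (Fin (2*n) × Fin (2*n)) (Fin (2*n) × Fin (2*n)) F) :
    op23 n (X + Y) = op23 n X + op23 n Y := by
  ext p r
  simp only [op23, Matrix.add_apply, mul_add]

lemma op12_smul (s : F) (X : Matrix (Fin (2*n) × Fin (2*n)) (Fin (2*n) × Fin (2*n)) F) :
    op12 n (s • X) = s • op12 n X := by
  ext p r
  simp only [op12, Matrix.smul_apply, smul_eq_mul, mul_assoc]

lemma op23_smul (s : F) (X : Matrix (Fin (2*n) × Fin (2*n)) (Fin (2*n) × Fin (2*n)) F) :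
    op23 n (s • X) = s • op23 n X := by
  ext p r
  simp only [op23, Matrix.smul_apply, smul_eq_mul, mul_left_comm]

lemma op12_sub (X Y : Matrix (Fin (2*n) × Fin (2*n)) (Fin (2*n) × Fin (2*n)) F) :
    op12 n (X - Y) = op12 n X - op12 n Y := by
  ext p r
  simp only [op12, Matrix.sub_apply, sub_mul]

lemma op23_sub (X Y : Matrix (Fin (2*n) × Fin (2*n)) (Fin (2*n) × Fin (2*n)) F) :
    op23 n (X - Y) = op23 n X - op23 n Y := by
  ext p r
  simp only [op23, Matrix.sub_apply, mul_sub]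

end operators

/-! ### Action on the triple tensor product -/

section triple

variable {F : Type*} [Field F] {n : ℕ} (q : F)

lemma T12_same (a c : Fin (2*n)) : op12 n (Tmat n q) *ᵥ e3 F a a c = q • e3 F a a c := by
  rw [op12_e3, T_e2_same, map_smul, lift12_e2]

lemma T23_same (a c : Fin (2*n)) : op23 n (Tmat n q) *ᵥ e3 F c a a = q • e3 F c a a := by
  rw [op23_e3, T_e2_same, map_smul, lift23_e2]

lemma T12_ne {a b : Fin (2*n)} (c : Fin (2*n)) (h : b ≠ primeIdx n a) (hab : a ≠ b) :
    op12 n (Tmat n q) *ᵥ e3 F a b c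
      = e3 F b a c + (if b < a then q - q⁻¹ else 0) • e3 F a b c := by
  rw [op12_e3, T_e2_ne q h hab, map_add, map_smul, lift12_e2, lift12_e2]

lemma T23_ne {a b : Fin (2*n)} (c : Fin (2*n)) (h : b ≠ primeIdx n a) (hab : a ≠ b) :
    op23 n (Tmat n q) *ᵥ e3 F c a b
      = e3 F c b a + (if b < a then q - q⁻¹ else 0) • e3 F c a b := by
  rw [op23_e3, T_e2_ne q h hab, map_add, map_smul, lift23_e2, lift23_e2]

lemma T12_prime (k c : Fin (2*n)) :
    op12 n (Tmat n q) *ᵥ e3 F k (primeIdx n k) c = q⁻¹ • e3 F (primeIdx n k) k c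
      + (if primeIdx n k < k then q - q⁻¹ else 0) • e3 F k (primeIdx n k) c
      - ((q - q⁻¹) * cWt n q k)
          • ∑ i with primeIdx n k < i, cWt n q i • e3 F i (primeIdx n i) c := by
  rw [op12_e3, T_e2_prime']
  simp only [map_add, map_sub, map_smul, map_sum, lift12_e2]

lemma T23_prime (k c : Fin (2*n)) :
    op23 n (Tmat n q) *ᵥ e3 F c k (primeIdx n k) = q⁻¹ • e3 F c (primeIdx n k) k
      + (if primeIdx n k < k then q - q⁻¹ else 0) • e3 F c k (primeIdx n k)
      - ((q - q⁻¹) * cWt n q k)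
          • ∑ i with primeIdx n k < i, cWt n q i • e3 F c i (primeIdx n i) := by
  rw [op23_e3, T_e2_prime']
  simp only [map_add, map_sub, map_smul, map_sum, lift23_e2]

/-- The invariant vector in the first two factors, tensored with `e_a`. -/
def wL (a : Fin (2*n)) : Fin (2*n) × Fin (2*n) × Fin (2*n) → F :=
  ∑ i, cWt n q i • e3 F i (primeIdx n i) a

/-- The invariant vector in the last two factors, tensored with `e_a`. -/
def wR (a : Fin (2*n)) : Fin (2*n) × Fin (2*n) × Fin (2*n) → F :=
  ∑ i, cWt n q i • e3 F a i (primeIdx n i)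

lemma E12_prime (k a : Fin (2*n)) :
    op12 n (Emat n q) *ᵥ e3 F k (primeIdx n k) a = cWt n q k • wL q a := by
  rw [op12_e3, E_e2_prime, map_sum, wL, Finset.smul_sum]
  refine Finset.sum_congr rfl fun i _ => ?_
  rw [map_smul, lift12_e2, smul_smul, mul_comm (cWt n q k)]

lemma E23_prime (k a : Fin (2*n)) :
    op23 n (Emat n q) *ᵥ e3 F a k (primeIdx n k) = cWt n q k • wR q a := by
  rw [op23_e3, E_e2_prime, map_sum, wR, Finset.smul_sum]
  refine Finset.sum_congr rfl fun i _ => ?_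
  rw [map_smul, lift23_e2, smul_smul, mul_comm (cWt n q k)]

lemma E12_ne {a b : Fin (2*n)} (c : Fin (2*n)) (h : b ≠ primeIdx n a) :
    op12 n (Emat n q) *ᵥ e3 F a b c = 0 := by
  rw [op12_e3, E_e2_ne q h, map_zero]

lemma E23_ne {a b : Fin (2*n)} (c : Fin (2*n)) (h : b ≠ primeIdx n a) :
    op23 n (Emat n q) *ᵥ e3 F c a b = 0 := by
  rw [op23_e3, E_e2_ne q h, map_zero]

lemma E23_wL (hq : q ≠ 0) (a : Fin (2*n)) : op23 n (Emat n q) *ᵥ wL q a = wR q a := by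
  rw [wL, Matrix.mulVec_sum, Finset.sum_eq_single a]
  · have h := E23_prime q (primeIdx n a) a
    rw [primeIdx_primeIdx, cWt_primeIdx] at h
    rw [Matrix.mulVec_smul, h, smul_inv_smul₀ (cWt_ne n q hq a)]
  · intro i _ hi
    rw [Matrix.mulVec_smul, E23_ne, smul_zero]
    rw [primeIdx_primeIdx]
    exact hi.symm
  · simp

lemma E12_wR (hq : q ≠ 0) (a : Fin (2*n)) : op12 n (Emat n q) *ᵥ wR q a = wL q a := by
  rw [wR, Matrix.mulVec_sum, Finset.sum_eq_single (primeIdx n a)]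
  · rw [Matrix.mulVec_smul]
    rw [E12_prime, primeIdx_primeIdx, cWt_primeIdx, inv_smul_smul₀ (cWt_ne n q hq a)]
  · intro i _ hi
    rw [Matrix.mulVec_smul, E12_ne _ _ hi, smul_zero]
  · simp

/-- The skein relation on the invariant vectors: the four ways to place a crossing or a smoothing
next to a cup. -/
lemma skein_w (hq : q ≠ 0) (a : Fin (2*n)) :
    op23 n (Tmat n q) *ᵥ wL q a - op12 n (Tmat n q) *ᵥ wR q a
      = (q - q⁻¹) • (wL q a - wR q a) := by
  set z := q - q⁻¹ with hz
  have hc := cWt_ne n q hq a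
  have hpp := primeIdx_primeIdx n a
  set SL : Fin (2*n) × Fin (2*n) × Fin (2*n) → F :=
    ∑ i with primeIdx n a < i, cWt n q i • e3 F i (primeIdx n i) a with hSL
  set SR : Fin (2*n) × Fin (2*n) × Fin (2*n) → F :=
    ∑ i with a < i, cWt n q i • e3 F a i (primeIdx n i) with hSR
  -- Termwise comparison; the tails arise only from the indices `a` and `a′`.
  have key : ∀ i, op23 n (Tmat n q) *ᵥ e3 F i (primeIdx n i) a
        - op12 n (Tmat n q) *ᵥ e3 F a i (primeIdx n i)
        - z • (e3 F i (primeIdx n i) a - e3 F a i (primeIdx n i))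
      = (if a < i then z else 0) • e3 F a i (primeIdx n i)
        - (if primeIdx n a < i then z else 0) • e3 F i (primeIdx n i) a
        - (if i = a then z * (cWt n q a)⁻¹ else 0) • SR
        + (if i = primeIdx n a then z * cWt n q a else 0) • SL := by
    intro i
    by_cases h1 : i = a
    · subst h1
      have h := T23_prime q (primeIdx n i) i
      rw [hpp, ← hz, ← hSR, cWt_primeIdx] at h
      rw [h, T12_same, if_pos rfl, if_neg (primeIdx_ne n i).symm, if_neg (lt_irrefl i)]
      rcases lt_or_gt_of_ne (primeIdx_ne n i) with h2 | h2
      · rw [if_pos h2, if_neg h2.not_gt, hz]; module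
      · rw [if_pos h2, if_neg h2.not_gt, hz]; module
    · by_cases h2 : i = primeIdx n a
      · subst h2
        rw [hpp, T23_same, T12_prime, ← hz, ← hSL, if_pos rfl, if_neg h1,
          if_neg (lt_irrefl (primeIdx n a))]
        rcases lt_or_gt_of_ne (primeIdx_ne n a) with h2 | h2
        · rw [if_pos h2, if_neg h2.not_gt, hz]; module
        · rw [if_pos h2, if_neg h2.not_gt, hz]; module
      · have h3 : a ≠ primeIdx n (primeIdx n i) := by rw [primeIdx_primeIdx]; exact Ne.symm h1
        have h4 : primeIdx n i ≠ a := fun h => h2 (by rw [← h, primeIdx_primeIdx])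
        rw [T23_ne q i h3 h4, T12_ne q _ h2 (Ne.symm h1), if_neg h1, if_neg h2, ← hz]
        have h5 : a < primeIdx n i ↔ i < primeIdx n a := by
          simp only [primeIdx, Fin.lt_def]; omega
        simp only [h5]
        rcases lt_or_gt_of_ne h1 with h6 | h6 <;> rcases lt_or_gt_of_ne h2 with h7 | h7 <;>
          simp only [h6, h7, h6.not_gt, h7.not_gt, if_true, if_false] <;> module
  rw [← sub_eq_zero]
  have e1 : op23 n (Tmat n q) *ᵥ wL q a - op12 n (Tmat n q) *ᵥ wR q a - z • (wL q a - wR q a)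
      = ∑ i, cWt n q i • (op23 n (Tmat n q) *ᵥ e3 F i (primeIdx n i) a
        - op12 n (Tmat n q) *ᵥ e3 F a i (primeIdx n i)
        - z • (e3 F i (primeIdx n i) a - e3 F a i (primeIdx n i))) := by
    simp only [wL, wR, Matrix.mulVec_sum, Matrix.mulVec_smul, smul_sub, Finset.sum_sub_distrib,
      Finset.smul_sum, smul_comm z]
  rw [e1, Finset.sum_congr rfl fun i _ => congrArg (cWt n q i • ·) (key i)]
  simp only [smul_add, smul_sub, Finset.sum_add_distrib, Finset.sum_sub_distrib, smul_smul]
  have e2 : ∑ i, (cWt n q i * if a < i then z else 0) • e3 F a i (primeIdx n i) = z • SR := by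
    rw [hSR, Finset.smul_sum, Finset.sum_filter]
    refine Finset.sum_congr rfl fun i _ => ?_
    split_ifs <;> module
  have e3' : ∑ i, (cWt n q i * if primeIdx n a < i then z else 0) • e3 F i (primeIdx n i) a
      = z • SL := by
    rw [hSL, Finset.smul_sum, Finset.sum_filter]
    refine Finset.sum_congr rfl fun i _ => ?_
    split_ifs <;> module
  rw [e2, e3', ← Finset.sum_smul, ← Finset.sum_smul]
  simp only [mul_ite, mul_zero, Finset.sum_ite_eq', Finset.mem_univ, if_true, cWt_primeIdx]
  match_scalars <;> field_simp <;> ring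

end triple

/-! ### The defining relations of the Birman–Murakami–Wenzl algebra -/

section relations

variable {F : Type*} [Field F] (n : ℕ) (q : F)

lemma eee_one (hq : q ≠ 0) :
    op12 n (Emat n q) * op23 n (Emat n q) * op12 n (Emat n q) = op12 n (Emat n q) := by
  apply ext_e3
  intro a b c
  simp only [← Matrix.mulVec_mulVec]
  by_cases h : b = primeIdx n a
  · subst h
    simp only [E12_prime, Matrix.mulVec_smul, E23_wL q hq, E12_wR q hq]
  · simp only [E12_ne q c h, Matrix.mulVec_zero]

lemma eee_two (hq : q ≠ 0) :
    op23 n (Emat n q) * op12 n (Emat n q) * op23 n (Emat n q) = op23 n (Emat n q) := by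
  apply ext_e3
  intro a b c
  simp only [← Matrix.mulVec_mulVec]
  by_cases h : c = primeIdx n b
  · subst h
    simp only [E23_prime, Matrix.mulVec_smul, E23_wL q hq, E12_wR q hq]
  · simp only [E23_ne q a h, Matrix.mulVec_zero]

lemma tee_one (hq : q ≠ 0) :
    op12 n (Tmat n q) * op23 n (Emat n q) * op12 n (Emat n q)
      = op23 n (Tmat n q) * op12 n (Emat n q)
        + (q - q⁻¹) • (op23 n (Emat n q) * op12 n (Emat n q))
        - (q - q⁻¹) • op12 n (Emat n q) := by
  apply ext_e3
  intro a b c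
  simp only [← Matrix.mulVec_mulVec, Matrix.add_mulVec, Matrix.sub_mulVec, Matrix.smul_mulVec]
  by_cases h : b = primeIdx n a
  · subst h
    simp only [E12_prime, Matrix.mulVec_smul, E23_wL q hq]
    linear_combination (norm := module) (-cWt n q a) • skein_w q hq c
  · simp only [E12_ne q c h, Matrix.mulVec_zero]
    simp

lemma tee_two (hq : q ≠ 0) :
    op23 n (Tmat n q) * op12 n (Emat n q) * op23 n (Emat n q)
      = op12 n (Tmat n q) * op23 n (Emat n q)
        + (q - q⁻¹) • (op12 n (Emat n q) * op23 n (Emat n q))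
        - (q - q⁻¹) • op23 n (Emat n q) := by
  apply ext_e3
  intro a b c
  simp only [← Matrix.mulVec_mulVec, Matrix.add_mulVec, Matrix.sub_mulVec, Matrix.smul_mulVec]
  by_cases h : c = primeIdx n b
  · subst h
    simp only [E23_prime, Matrix.mulVec_smul, E12_wR q hq]
    linear_combination (norm := module) (cWt n q b) • skein_w q hq a
  · simp only [E23_ne q a h, Matrix.mulVec_zero]
    simp

lemma sq_one (hq : q ≠ 0) :
    op12 n (Tmat n q) * op12 n (Tmat n q) = 1 + (q - q⁻¹) • op12 n (Tmat n q)
      - ((q - q⁻¹) * nuVal n q) • op12 n (Emat n q) := by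
  rw [← op12_mul, T_mul_T n q hq, op12_sub, op12_add, op12_one, op12_smul, op12_smul]

lemma sq_two (hq : q ≠ 0) :
    op23 n (Tmat n q) * op23 n (Tmat n q) = 1 + (q - q⁻¹) • op23 n (Tmat n q)
      - ((q - q⁻¹) * nuVal n q) • op23 n (Emat n q) := by
  rw [← op23_mul, T_mul_T n q hq, op23_sub, op23_add, op23_one, op23_smul, op23_smul]

lemma te_one (hq : q ≠ 0) :
    op12 n (Tmat n q) * op12 n (Emat n q) = nuVal n q • op12 n (Emat n q) := by
  rw [← op12_mul, T_mul_E n q hq, op12_smul]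

lemma te_two (hq : q ≠ 0) :
    op23 n (Tmat n q) * op23 n (Emat n q) = nuVal n q • op23 n (Emat n q) := by
  rw [← op23_mul, T_mul_E n q hq, op23_smul]

lemma ee_one : op12 n (Emat n q) * op12 n (Emat n q)
    = (∑ i, cWt n q i ^ 2) • op12 n (Emat n q) := by
  rw [← op12_mul, E_mul_E, op12_smul]

lemma ee_two : op23 n (Emat n q) * op23 n (Emat n q)
    = (∑ i, cWt n q i ^ 2) • op23 n (Emat n q) := by
  rw [← op23_mul, E_mul_E, op23_smul]

lemma tte_one (hq : q ≠ 0) :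
    op12 n (Tmat n q) * op23 n (Tmat n q) * op12 n (Emat n q)
      = op23 n (Emat n q) * op12 n (Emat n q) := by
  have h := congrArg (op12 n (Tmat n q) * ·) (tee_one n q hq)
  simp only [mul_add, mul_sub, mul_smul_comm, ← mul_assoc, sq_one n q hq, te_one n q hq, add_mul,
    sub_mul, smul_mul_assoc, one_mul, eee_one n q hq] at h
  linear_combination (norm := module) -h

lemma tte_two (hq : q ≠ 0) :
    op23 n (Tmat n q) * op12 n (Tmat n q) * op23 n (Emat n q)
      = op12 n (Emat n q) * op23 n (Emat n q) := by
  have h := congrArg (op23 n (Tmat n q) * ·) (tee_two n q hq)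
  simp only [mul_add, mul_sub, mul_smul_comm, ← mul_assoc, sq_two n q hq, te_two n q hq, add_mul,
    sub_mul, smul_mul_assoc, one_mul, eee_two n q hq] at h
  linear_combination (norm := module) -h

lemma et_one (hq : q ≠ 0) :
    op12 n (Emat n q) * op12 n (Tmat n q) = nuVal n q • op12 n (Emat n q) := by
  have h := congrArg Matrix.transpose (te_one n q hq)
  simpa only [Matrix.transpose_mul, Matrix.transpose_smul, op12_transpose, T_transpose,
    E_transpose] using h

lemma et_two (hq : q ≠ 0) :
    op23 n (Emat n q) * op23 n (Tmat n q) = nuVal n q • op23 n (Emat n q) := by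
  have h := congrArg Matrix.transpose (te_two n q hq)
  simpa only [Matrix.transpose_mul, Matrix.transpose_smul, op23_transpose, T_transpose,
    E_transpose] using h

lemma eet_one (hq : q ≠ 0) :
    op12 n (Emat n q) * op23 n (Emat n q) * op12 n (Tmat n q)
      = op12 n (Emat n q) * op23 n (Tmat n q)
        + (q - q⁻¹) • (op12 n (Emat n q) * op23 n (Emat n q))
        - (q - q⁻¹) • op12 n (Emat n q) := by
  have h := congrArg Matrix.transpose (tee_one n q hq)
  simpa only [Matrix.transpose_mul, Matrix.transpose_smul, Matrix.transpose_add,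
    Matrix.transpose_sub, op12_transpose, op23_transpose, T_transpose, E_transpose,
    ← mul_assoc] using h

lemma eet_two (hq : q ≠ 0) :
    op23 n (Emat n q) * op12 n (Emat n q) * op23 n (Tmat n q)
      = op23 n (Emat n q) * op12 n (Tmat n q)
        + (q - q⁻¹) • (op23 n (Emat n q) * op12 n (Emat n q))
        - (q - q⁻¹) • op23 n (Emat n q) := by
  have h := congrArg Matrix.transpose (tee_two n q hq)
  simpa only [Matrix.transpose_mul, Matrix.transpose_smul, Matrix.transpose_add,
    Matrix.transpose_sub, op12_transpose, op23_transpose, T_transpose, E_transpose,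
    ← mul_assoc] using h

lemma ett_one (hq : q ≠ 0) :
    op12 n (Emat n q) * op23 n (Tmat n q) * op12 n (Tmat n q)
      = op12 n (Emat n q) * op23 n (Emat n q) := by
  have h := congrArg Matrix.transpose (tte_one n q hq)
  simpa only [Matrix.transpose_mul, op12_transpose, op23_transpose, T_transpose, E_transpose,
    ← mul_assoc] using h

lemma ett_two (hq : q ≠ 0) :
    op23 n (Emat n q) * op12 n (Tmat n q) * op23 n (Tmat n q)
      = op23 n (Emat n q) * op12 n (Emat n q) := by
  have h := congrArg Matrix.transpose (tte_two n q hq)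
  simpa only [Matrix.transpose_mul, op12_transpose, op23_transpose, T_transpose, E_transpose,
    ← mul_assoc] using h

end relations

/-! ### The braid relation -/

section braid

variable {F : Type*} [Field F] (n : ℕ) (q : F)

/-- The defect `T₁T₂T₁ − T₂T₁T₂` of the braid relation. -/
def braidDefect : Matrix (Fin (2*n) × Fin (2*n) × Fin (2*n)) (Fin (2*n) × Fin (2*n) × Fin (2*n)) F :=
  op12 n (Tmat n q) * op23 n (Tmat n q) * op12 n (Tmat n q)
    - op23 n (Tmat n q) * op12 n (Tmat n q) * op23 n (Tmat n q)

/-- With the quadratic relations, the kernel of the braid defect is stable under `T₁`. -/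
lemma braidDefect_T12 (hq : q ≠ 0) :
    braidDefect n q * op12 n (Tmat n q)
      = (q - q⁻¹) • braidDefect n q - op23 n (Tmat n q) * braidDefect n q := by
  have h1 : op23 n (Tmat n q) * op23 n (Tmat n q) * op12 n (Tmat n q) * op23 n (Tmat n q)
      - op12 n (Tmat n q) * op23 n (Tmat n q) * (op12 n (Tmat n q) * op12 n (Tmat n q))
      = (q - q⁻¹) • (op23 n (Tmat n q) * op12 n (Tmat n q) * op23 n (Tmat n q)
        - op12 n (Tmat n q) * op23 n (Tmat n q) * op12 n (Tmat n q)) := by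
    rw [sq_one n q hq, sq_two n q hq]
    simp only [mul_add, mul_sub, add_mul, sub_mul, mul_smul_comm, smul_mul_assoc, mul_one, one_mul,
      ett_two n q hq, tte_one n q hq]
    module
  simp only [mul_assoc, braidDefect, sub_mul, mul_sub] at h1 ⊢
  linear_combination (norm := module) -h1

/-- With the quadratic relations, the kernel of the braid defect is stable under `T₂`. -/
lemma braidDefect_T23 (hq : q ≠ 0) :
    braidDefect n q * op23 n (Tmat n q)
      = (q - q⁻¹) • braidDefect n q - op12 n (Tmat n q) * braidDefect n q := by
  have h1 : op12 n (Tmat n q) * op12 n (Tmat n q) * op23 n (Tmat n q) * op12 n (Tmat n q)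
      - op23 n (Tmat n q) * op12 n (Tmat n q) * (op23 n (Tmat n q) * op23 n (Tmat n q))
      = (q - q⁻¹) • (op12 n (Tmat n q) * op23 n (Tmat n q) * op12 n (Tmat n q)
        - op23 n (Tmat n q) * op12 n (Tmat n q) * op23 n (Tmat n q)) := by
    rw [sq_one n q hq, sq_two n q hq]
    simp only [mul_add, mul_sub, add_mul, sub_mul, mul_smul_comm, smul_mul_assoc, mul_one, one_mul,
      ett_one n q hq, tte_two n q hq]
    module
  simp only [mul_assoc, braidDefect, sub_mul, mul_sub] at h1 ⊢
  linear_combination (norm := module) h1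

variable {n}

/-- The braid relation holds on `e_a ⊗ e_b ⊗ e_c`. -/
def BraidOn (a b c : Fin (2*n)) : Prop := braidDefect n q *ᵥ e3 F a b c = 0

variable {q}

lemma braidOn_iff (a b c : Fin (2*n)) : BraidOn q a b c ↔
    op12 n (Tmat n q) *ᵥ op23 n (Tmat n q) *ᵥ op12 n (Tmat n q) *ᵥ e3 F a b c
      = op23 n (Tmat n q) *ᵥ op12 n (Tmat n q) *ᵥ op23 n (Tmat n q) *ᵥ e3 F a b c := by
  rw [BraidOn, braidDefect, Matrix.sub_mulVec, sub_eq_zero]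
  simp only [Matrix.mulVec_mulVec, mul_assoc]

lemma braidDefect_T12_vec (hq : q ≠ 0) {v : Fin (2*n) × Fin (2*n) × Fin (2*n) → F}
    (hv : braidDefect n q *ᵥ v = 0) : braidDefect n q *ᵥ op12 n (Tmat n q) *ᵥ v = 0 := by
  rw [Matrix.mulVec_mulVec, braidDefect_T12 n q hq, Matrix.sub_mulVec, Matrix.smul_mulVec,
    ← Matrix.mulVec_mulVec, hv, Matrix.mulVec_zero, smul_zero, sub_zero]

lemma braidDefect_T23_vec (hq : q ≠ 0) {v : Fin (2*n) × Fin (2*n) × Fin (2*n) → F}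
    (hv : braidDefect n q *ᵥ v = 0) : braidDefect n q *ᵥ op23 n (Tmat n q) *ᵥ v = 0 := by
  rw [Matrix.mulVec_mulVec, braidDefect_T23 n q hq, Matrix.sub_mulVec, Matrix.smul_mulVec,
    ← Matrix.mulVec_mulVec, hv, Matrix.mulVec_zero, smul_zero, sub_zero]

lemma BraidOn.swap12 (hq : q ≠ 0) {a b c : Fin (2*n)} (h : b ≠ primeIdx n a) (hab : a ≠ b)
    (hK : BraidOn q a b c) : BraidOn q b a c := by
  have h1 := braidDefect_T12_vec hq hK
  rwa [T12_ne q c h hab, Matrix.mulVec_add, Matrix.mulVec_smul, hK, smul_zero, add_zero] at h1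

lemma BraidOn.swap23 (hq : q ≠ 0) {a b c : Fin (2*n)} (h : c ≠ primeIdx n b) (hbc : b ≠ c)
    (hK : BraidOn q a b c) : BraidOn q a c b := by
  have h1 := braidDefect_T23_vec hq hK
  rwa [T23_ne q a h hbc, Matrix.mulVec_add, Matrix.mulVec_smul, hK, smul_zero, add_zero] at h1

lemma BraidOn.pair12 (hq : q ≠ 0) {m a : Fin (2*n)}
    (ht : ∀ i, primeIdx n m < i → BraidOn q i (primeIdx n i) a)
    (hK : BraidOn q m (primeIdx n m) a) : BraidOn q (primeIdx n m) m a := by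
  have h1 := braidDefect_T12_vec hq hK
  have h2 : ∑ i with primeIdx n m < i, cWt n q i • braidDefect n q *ᵥ e3 F i (primeIdx n i) a
      = 0 := Finset.sum_eq_zero fun i hi => by
    rw [show braidDefect n q *ᵥ e3 F i (primeIdx n i) a = 0 from ht i (Finset.mem_filter.1 hi).2,
      smul_zero]
  rw [T12_prime, Matrix.mulVec_sub, Matrix.mulVec_add, Matrix.mulVec_smul, Matrix.mulVec_smul, hK,
    Matrix.mulVec_smul, Matrix.mulVec_sum] at h1
  simp only [Matrix.mulVec_smul, h2, smul_zero, add_zero, sub_zero] at h1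
  exact (smul_eq_zero.1 h1).resolve_left (inv_ne_zero hq)

lemma BraidOn.pair23 (hq : q ≠ 0) {m a : Fin (2*n)}
    (ht : ∀ i, primeIdx n m < i → BraidOn q a i (primeIdx n i))
    (hK : BraidOn q a m (primeIdx n m)) : BraidOn q a (primeIdx n m) m := by
  have h1 := braidDefect_T23_vec hq hK
  have h2 : ∑ i with primeIdx n m < i, cWt n q i • braidDefect n q *ᵥ e3 F a i (primeIdx n i)
      = 0 := Finset.sum_eq_zero fun i hi => by
    rw [show braidDefect n q *ᵥ e3 F a i (primeIdx n i) = 0 from ht i (Finset.mem_filter.1 hi).2,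
      smul_zero]
  rw [T23_prime, Matrix.mulVec_sub, Matrix.mulVec_add, Matrix.mulVec_smul, Matrix.mulVec_smul, hK,
    Matrix.mulVec_smul, Matrix.mulVec_sum] at h1
  simp only [Matrix.mulVec_smul, h2, smul_zero, add_zero, sub_zero] at h1
  exact (smul_eq_zero.1 h1).resolve_left (inv_ne_zero hq)

variable (n) in
/-- The involution `(a, b, c) ↦ (c′, b′, a′)`, which exchanges `T₁` and `T₂`. -/
def revPrime (p : Fin (2*n) × Fin (2*n) × Fin (2*n)) : Fin (2*n) × Fin (2*n) × Fin (2*n) :=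
  (primeIdx n p.2.2, primeIdx n p.2.1, primeIdx n p.1)

lemma revPrime_revPrime : Function.Involutive (revPrime n) := fun p => by
  simp [revPrime, primeIdx_primeIdx]

lemma T_revPrime (p1 p2 r1 r2 : Fin (2*n)) :
    Tmat n q (primeIdx n p2, primeIdx n p1) (primeIdx n r2, primeIdx n r1)
      = Tmat n q (p1, p2) (r1, r2) := by
  have h1 : primeIdx n p1 = primeIdx n (primeIdx n p2) ↔ p2 = primeIdx n p1 := by
    rw [primeIdx_inj, eq_primeIdx_comm]
  have h2 : primeIdx n r1 = primeIdx n (primeIdx n r2) ↔ r2 = primeIdx n r1 := by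
    rw [primeIdx_inj, eq_primeIdx_comm]
  simp only [Tmat, Prod.mk.injEq, primeIdx_inj, primeIdx_lt, h1, h2]
  by_cases h3 : r2 = primeIdx n r1
  · by_cases h4 : p2 = primeIdx n p1
    · subst h3 h4; simp [primeIdx_primeIdx]
    · simp [h3, h4]
  · simp only [h3, if_false]
    by_cases h5 : r1 = r2
    · subst h5; simp [and_comm]
    · simp [h5, Ne.symm h5, and_comm]

lemma T12_submatrix :
    (op12 n (Tmat n q)).submatrix (revPrime n) (revPrime n) = op23 n (Tmat n q) := by
  ext p r
  simp only [Matrix.submatrix_apply, op12, op23, revPrime, T_revPrime, primeIdx_inj, mul_comm]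

lemma T23_submatrix :
    (op23 n (Tmat n q)).submatrix (revPrime n) (revPrime n) = op12 n (Tmat n q) := by
  ext p r
  simp only [Matrix.submatrix_apply, op12, op23, revPrime, T_revPrime, primeIdx_inj, mul_comm]

lemma braidDefect_submatrix :
    (braidDefect n q).submatrix (revPrime n) (revPrime n) = -braidDefect n q := by
  have hm : ∀ A B : Matrix (Fin (2*n) × Fin (2*n) × Fin (2*n))
      (Fin (2*n) × Fin (2*n) × Fin (2*n)) F, (A * B).submatrix (revPrime n) (revPrime n)
      = A.submatrix (revPrime n) (revPrime n) * B.submatrix (revPrime n) (revPrime n) :=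
    fun A B => (Matrix.submatrix_mul_equiv A B (revPrime n)
      (revPrime_revPrime (n := n)).toPerm (revPrime n)).symm
  simp only [braidDefect, Matrix.submatrix_sub, hm, T12_submatrix, T23_submatrix, Pi.sub_apply,
    neg_sub]

lemma BraidOn.rev {a b c : Fin (2*n)} (hK : BraidOn q a b c) :
    BraidOn q (primeIdx n c) (primeIdx n b) (primeIdx n a) := by
  rw [BraidOn, e3, Matrix.mulVec_single_one] at hK ⊢
  ext p
  have h1 := congrFun hK (revPrime n p)
  have h2 := congrFun (congrFun (braidDefect_submatrix (n := n) (q := q)) p)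
    (revPrime n (a, b, c))
  rw [Matrix.submatrix_apply, revPrime_revPrime] at h2
  simp only [Matrix.col_apply, Pi.zero_apply, Matrix.neg_apply] at h1 h2 ⊢
  rw [h1] at h2
  exact (neg_eq_zero.1 h2.symm)

/-- Triples without a pair of mutually primed indices: the type `A` computation. -/
lemma braidOn_generic (hq : q ≠ 0) {a b c : Fin (2*n)} (h1 : b ≠ primeIdx n a)
    (h2 : c ≠ primeIdx n a) (h3 : c ≠ primeIdx n b) : BraidOn q a b c := by
  have h1' : a ≠ primeIdx n b := fun h => h1 ((eq_primeIdx_comm n a b).1 h)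
  have h2' : a ≠ primeIdx n c := fun h => h2 ((eq_primeIdx_comm n a c).1 h)
  have h3' : b ≠ primeIdx n c := fun h => h3 ((eq_primeIdx_comm n b c).1 h)
  -- Sorted triples; the others follow by transpositions.
  have key : ∀ a b c : Fin (2*n), b ≠ primeIdx n a → c ≠ primeIdx n a → c ≠ primeIdx n b →
      a ≤ b → b ≤ c → BraidOn q a b c := by
    intro a b c h1 h2 h3 hab hbc
    rw [braidOn_iff]
    rcases hab.eq_or_lt with rfl | hab
    · rcases hbc.eq_or_lt with rfl | hbc
      · simp only [T12_same, T23_same, Matrix.mulVec_smul]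
      · have h2' : a ≠ primeIdx n c := fun h => h2 ((eq_primeIdx_comm n a c).1 h)
        simp only [T12_same, T23_same, Matrix.mulVec_smul, T12_ne q _ h2 hbc.ne,
          T23_ne q _ h2 hbc.ne, hbc.not_gt, if_false, zero_smul, add_zero]
    · rcases hbc.eq_or_lt with rfl | hbc
      · simp only [T12_same, T23_same, Matrix.mulVec_smul, T12_ne q _ h2 hab.ne,
          T23_ne q _ h2 hab.ne, hab.not_gt, if_false, zero_smul, add_zero]
      · have hac := hab.trans hbc
        simp only [T12_ne q _ h2 hac.ne, T12_ne q _ h1 hab.ne, T12_ne q _ h3 hbc.ne,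
          T23_ne q _ h2 hac.ne, T23_ne q _ h1 hab.ne, T23_ne q _ h3 hbc.ne,
          hab.not_gt, hbc.not_gt, hac.not_gt, if_false, zero_smul, add_zero]
  have sw12 : ∀ {a b c : Fin (2*n)}, b ≠ primeIdx n a → BraidOn q a b c → BraidOn q b a c := by
    intro a b c h hK
    by_cases hab : a = b
    · subst hab; exact hK
    · exact hK.swap12 hq h hab
  have sw23 : ∀ {a b c : Fin (2*n)}, c ≠ primeIdx n b → BraidOn q a b c → BraidOn q a c b := by
    intro a b c h hK
    by_cases hbc : b = c
    · subst hbc; exact hK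
    · exact hK.swap23 hq h hbc
  rcases le_total a b with hab | hab <;> rcases le_total b c with hbc | hbc <;>
    rcases le_total a c with hac | hac
  · exact key a b c h1 h2 h3 hab hbc
  · exact key a b c h1 h2 h3 hab hbc
  · exact sw23 h3' (key a c b h2 h1 h3' hac hbc)
  · exact sw23 h3' (sw12 h2' (key c a b h2' h3' h1 hac hab))
  · exact sw12 h1' (key b a c h1' h3 h2 hab hac)
  · exact sw12 h1' (sw23 h2' (key b c a h3 h1' h2' hbc hac))
  · exact sw12 h1' (sw23 h2' (sw12 h3' (key c b a h3' h2' h1' hbc hab)))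
  · exact sw12 h1' (sw23 h2' (sw12 h3' (key c b a h3' h2' h1' hbc hab)))

lemma mulVec_tail {M : Matrix (Fin (2*n) × Fin (2*n) × Fin (2*n))
      (Fin (2*n) × Fin (2*n) × Fin (2*n)) F} {m : Fin (2*n)}
    {f g : Fin (2*n) → Fin (2*n) × Fin (2*n) × Fin (2*n) → F}
    (h : ∀ i, m < i → M *ᵥ f i = g i) :
    M *ᵥ ∑ i with m < i, cWt n q i • f i = ∑ i with m < i, cWt n q i • g i := by
  rw [Matrix.mulVec_sum]
  refine Finset.sum_congr rfl fun i hi => ?_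
  rw [Matrix.mulVec_smul, h i (Finset.mem_filter.1 hi).2]

/-- The case `m < a < m′`: no further tails arise, and both sides are equal term by term. -/
lemma braidOn_between {a m : Fin (2*n)} (h1 : m < a) (h2 : a < primeIdx n m) :
    BraidOn q m a (primeIdx n m) := by
  have hpp := primeIdx_primeIdx n m
  have h3 : primeIdx n m ≠ primeIdx n a := by rw [Ne, primeIdx_inj]; exact h1.ne
  have h4 : primeIdx n a < primeIdx n m := (primeIdx_lt n a m).2 h1
  have hm := h1.trans h2
  have h5 : ∀ i, primeIdx n m < i → primeIdx n i < m := fun i hi => by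
    rwa [primeIdx_lt_comm]
  have e1 : op12 n (Tmat n q) *ᵥ e3 F m a (primeIdx n m) = e3 F a m (primeIdx n m) := by
    rw [T12_ne q _ h2.ne h1.ne, if_neg h1.not_gt, zero_smul, add_zero]
  have e2 : op23 n (Tmat n q) *ᵥ e3 F m a (primeIdx n m) = e3 F m (primeIdx n m) a := by
    rw [T23_ne q _ h3 h2.ne, if_neg h2.not_gt, zero_smul, add_zero]
  have e3' : op12 n (Tmat n q) *ᵥ e3 F a (primeIdx n m) m = e3 F (primeIdx n m) a m := by
    rw [T12_ne q _ h3 h2.ne, if_neg h2.not_gt, zero_smul, add_zero]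
  have e4 : op23 n (Tmat n q) *ᵥ e3 F (primeIdx n m) m a = e3 F (primeIdx n m) a m := by
    rw [T23_ne q _ h2.ne h1.ne, if_neg h1.not_gt, zero_smul, add_zero]
  have t1 : ∀ i, primeIdx n m < i → op12 n (Tmat n q) *ᵥ e3 F a i (primeIdx n i)
      = e3 F i a (primeIdx n i) := fun i hi => by
    have h6 := h2.trans hi
    rw [T12_ne q _ (h4.trans hi).ne' h6.ne, if_neg h6.not_gt, zero_smul, add_zero]
  have t2 : ∀ i, primeIdx n m < i → op23 n (Tmat n q) *ᵥ e3 F i (primeIdx n i) a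
      = e3 F i a (primeIdx n i) := fun i hi => by
    have h6 := (h5 i hi).trans h1
    rw [T23_ne q _ (by rw [primeIdx_primeIdx]; exact (h2.trans hi).ne) h6.ne, if_neg h6.not_gt,
      zero_smul, add_zero]
  rw [braidOn_iff, e1, e2, T23_prime, T12_prime]
  simp only [Matrix.mulVec_sub, Matrix.mulVec_smul, e3', e4, mulVec_tail t1,
    mulVec_tail t2, if_neg hm.not_gt, zero_smul, add_zero]

lemma braidOn_double (hq : q ≠ 0) {m : Fin (2*n)} (hm : m < primeIdx n m) :
    BraidOn q m m (primeIdx n m) := by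
  have h5 : ∀ i, primeIdx n m < i → primeIdx n i < m := fun i hi => by
    rwa [primeIdx_lt_comm]
  have t1 : ∀ i, primeIdx n m < i → op12 n (Tmat n q) *ᵥ e3 F m i (primeIdx n i)
      = e3 F i m (primeIdx n i) := fun i hi => by
    have h6 := hm.trans hi
    rw [T12_ne q _ hi.ne' h6.ne, if_neg h6.not_gt, zero_smul, add_zero]
  have t2 : ∀ i, primeIdx n m < i → op23 n (Tmat n q) *ᵥ e3 F i (primeIdx n i) m
      = e3 F i m (primeIdx n i) := fun i hi => by
    rw [T23_ne q _ (by rw [primeIdx_primeIdx]; exact (hm.trans hi).ne) (h5 i hi).ne,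
      if_neg (h5 i hi).not_gt, zero_smul, add_zero]
  have t3 : ∀ i, primeIdx n m < i → op23 n (Tmat n q) *ᵥ e3 F i m (primeIdx n i)
      = e3 F i (primeIdx n i) m + (q - q⁻¹) • e3 F i m (primeIdx n i) := fun i hi => by
    rw [T23_ne q _ (by rw [Ne, primeIdx_inj]; exact (hm.trans hi).ne') (h5 i hi).ne',
      if_pos (h5 i hi)]
  have t4 : op23 n (Tmat n q) *ᵥ ∑ i with primeIdx n m < i, cWt n q i • e3 F i m (primeIdx n i)
      = (∑ i with primeIdx n m < i, cWt n q i • e3 F i (primeIdx n i) m)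
        + (q - q⁻¹) • ∑ i with primeIdx n m < i, cWt n q i • e3 F i m (primeIdx n i) := by
    rw [mulVec_tail t3, Finset.smul_sum, ← Finset.sum_add_distrib]
    refine Finset.sum_congr rfl fun i _ => ?_
    rw [smul_add, smul_comm]
  rw [braidOn_iff, T12_same, Matrix.mulVec_smul, T23_prime]
  simp only [Matrix.mulVec_sub, Matrix.mulVec_smul, T12_prime, T23_same,
    mulVec_tail t1, mulVec_tail t2, t4, if_neg hm.not_gt, zero_smul, add_zero]
  match_scalars <;> field_simp <;> ring

/-- The case `a < m < m′`. The tail `∑_{i > m′}` contains the index `i = a′`, so a second tail arises;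
it cancels against the `z`-terms with `i > a′`. -/
lemma braidOn_below (hq : q ≠ 0) {a m : Fin (2*n)} (h1 : a < m) (hm : m < primeIdx n m) :
    BraidOn q a m (primeIdx n m) := by
  have ham := h1.trans hm
  have ha : primeIdx n m < primeIdx n a := (primeIdx_lt n m a).2 h1
  have haa := ham.trans ha
  have n1 : m ≠ primeIdx n a := (hm.trans ha).ne
  have n2 : primeIdx n m ≠ primeIdx n a := ha.ne
  have hpa := primeIdx_primeIdx n a
  set SL : Fin (2*n) × Fin (2*n) × Fin (2*n) → F :=
    ∑ l with primeIdx n a < l, cWt n q l • e3 F l a (primeIdx n l) with hSL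
  have e1 : op12 n (Tmat n q) *ᵥ e3 F a m (primeIdx n m) = e3 F m a (primeIdx n m) := by
    rw [T12_ne q _ n1 h1.ne, if_neg h1.not_gt, zero_smul, add_zero]
  have e2 : op23 n (Tmat n q) *ᵥ e3 F m a (primeIdx n m) = e3 F m (primeIdx n m) a := by
    rw [T23_ne q _ n2 ham.ne, if_neg ham.not_gt, zero_smul, add_zero]
  have e3' : op12 n (Tmat n q) *ᵥ e3 F a (primeIdx n m) m = e3 F (primeIdx n m) a m := by
    rw [T12_ne q _ n2 ham.ne, if_neg ham.not_gt, zero_smul, add_zero]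
  have e4 : op23 n (Tmat n q) *ᵥ e3 F (primeIdx n m) a m = e3 F (primeIdx n m) m a := by
    rw [T23_ne q _ n1 h1.ne, if_neg h1.not_gt, zero_smul, add_zero]
  have t0 : ∀ l, primeIdx n a < l → op23 n (Tmat n q) *ᵥ e3 F l (primeIdx n l) a
      = e3 F l a (primeIdx n l) := fun l hl => by
    have h6 : primeIdx n l < a := by rwa [primeIdx_lt_comm]
    rw [T23_ne q _ (by rw [primeIdx_primeIdx]; exact (haa.trans hl).ne) h6.ne, if_neg h6.not_gt,
      zero_smul, add_zero]
  -- The index `i = a′` produces a further tail, which cancels the terms with `i > a′`.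
  have t1 : ∀ i, primeIdx n m < i →
      op23 n (Tmat n q) *ᵥ op12 n (Tmat n q) *ᵥ e3 F a i (primeIdx n i)
        = e3 F i (primeIdx n i) a
          + ((if primeIdx n a < i then q - q⁻¹ else 0) • e3 F i a (primeIdx n i)
            - (if i = primeIdx n a then (q - q⁻¹) * cWt n q a else 0) • SL) := fun i hi => by
    by_cases hia : i = primeIdx n a
    · subst hia
      rw [hpa, T12_prime, if_neg haa.not_gt, if_neg (lt_irrefl _), if_pos rfl]
      simp only [Matrix.mulVec_sub, Matrix.mulVec_add, Matrix.mulVec_smul, T23_same,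
        mulVec_tail t0, ← hSL]
      match_scalars <;> field_simp <;> ring
    · have hi' := ham.trans hi
      have h6 : primeIdx n i < a ↔ primeIdx n a < i := primeIdx_lt_comm n i a
      rw [T12_ne q _ hia hi'.ne, if_neg hi'.not_gt, zero_smul, add_zero,
        T23_ne q _ (by rw [Ne, primeIdx_inj]; exact hi'.ne')
          (fun h => hia (by rw [h, primeIdx_primeIdx])), if_neg hia]
      simp only [h6]
      module
  have t2 : op23 n (Tmat n q) *ᵥ op12 n (Tmat n q) *ᵥ
        ∑ i with primeIdx n m < i, cWt n q i • e3 F a i (primeIdx n i)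
      = ∑ i with primeIdx n m < i, cWt n q i • e3 F i (primeIdx n i) a := by
    rw [Matrix.mulVec_mulVec, mulVec_tail (fun i hi => by rw [← Matrix.mulVec_mulVec, t1 i hi])]
    simp only [smul_add, Finset.sum_add_distrib]
    rw [add_eq_left]
    simp only [smul_sub, Finset.sum_sub_distrib, smul_smul, ← Finset.sum_smul]
    rw [sub_eq_zero]
    have s1 : ∑ i with primeIdx n m < i,
        (cWt n q i * if i = primeIdx n a then (q - q⁻¹) * cWt n q a else 0) = q - q⁻¹ := by
      rw [Finset.sum_eq_single (primeIdx n a)]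
      · have := cWt_ne n q hq a
        rw [if_pos rfl, cWt_primeIdx]
        field_simp
      · intro i _ hi
        rw [if_neg hi, mul_zero]
      · intro h
        exact absurd (Finset.mem_filter.2 ⟨Finset.mem_univ _, ha⟩) h
    rw [s1, hSL, Finset.sum_filter, Finset.sum_filter, Finset.smul_sum]
    refine Finset.sum_congr rfl fun i _ => ?_
    by_cases h6 : primeIdx n a < i
    · rw [if_pos h6, if_pos h6, if_pos (ha.trans h6), smul_smul, mul_comm (cWt n q i)]
    · rw [if_neg h6, if_neg h6, mul_zero, zero_smul, ite_self, smul_zero]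
  rw [braidOn_iff, e1, e2, T12_prime, T23_prime]
  simp only [Matrix.mulVec_sub, Matrix.mulVec_smul, t2, e3', e4,
    if_neg hm.not_gt, zero_smul, add_zero]

/-- The triples containing `m` and `m′`. The tails produced by `T` only involve pairs `i, i′` with
`i′ < m`, which makes an induction on `m` possible. -/
lemma braidOn_pair (hq : q ≠ 0) (m : Fin (2*n)) (hm : m < primeIdx n m) (a : Fin (2*n)) :
    (BraidOn q a m (primeIdx n m) ∧ BraidOn q m a (primeIdx n m) ∧ BraidOn q m (primeIdx n m) a) ∧
    (BraidOn q a (primeIdx n m) m ∧ BraidOn q (primeIdx n m) a m ∧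
      BraidOn q (primeIdx n m) m a) := by
  induction m using WellFoundedLT.induction generalizing a with
  | ind m ih =>
  have hpp := primeIdx_primeIdx n m
  have htail : ∀ i, primeIdx n m < i → ∀ a,
      BraidOn q i (primeIdx n i) a ∧ BraidOn q a i (primeIdx n i) := by
    intro i hi a
    have h1 : primeIdx n i < m := by rwa [primeIdx_lt_comm]
    have h2 : primeIdx n i < primeIdx n (primeIdx n i) := by
      rw [primeIdx_primeIdx]; exact h1.trans (hm.trans hi)
    have h3 := ih (primeIdx n i) h1 h2 a
    rw [primeIdx_primeIdx] at h3
    exact ⟨h3.2.2.2, h3.2.1⟩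
  have p12 : ∀ a, BraidOn q m (primeIdx n m) a → BraidOn q (primeIdx n m) m a := fun a h =>
    h.pair12 hq fun i hi => (htail i hi a).1
  have p23 : ∀ a, BraidOn q a m (primeIdx n m) → BraidOn q a (primeIdx n m) m := fun a h =>
    h.pair23 hq fun i hi => (htail i hi a).2
  by_cases ha : a = m
  · subst ha
    have h1 := braidOn_double (q := q) hq hm
    have h2 := p23 _ h1
    have h3 := p12 _ h2
    exact ⟨⟨h1, h1, h2⟩, h2, h3, h3⟩
  by_cases ha' : a = primeIdx n m
  · have h1 : BraidOn q m (primeIdx n m) (primeIdx n m) := by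
      have := (braidOn_double (q := q) hq hm).rev
      rwa [hpp] at this
    have h2 := p12 _ h1
    have h3 := p23 _ h2
    subst ha'
    exact ⟨⟨h2, h1, h1⟩, h3, h3, h2⟩
  have n1 : m ≠ primeIdx n a := fun h => ha' ((eq_primeIdx_comm n m a).1 h)
  have n2 : primeIdx n m ≠ primeIdx n a := by rw [Ne, primeIdx_inj]; exact Ne.symm ha
  have n3 : a ≠ primeIdx n (primeIdx n m) := by rwa [hpp]
  have base : BraidOn q m a (primeIdx n m) := by
    rcases lt_or_gt_of_ne ha with h1 | h1
    · exact (braidOn_below hq h1 hm).swap12 hq n1 ha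
    · rcases lt_or_gt_of_ne ha' with h2 | h2
      · exact braidOn_between h1 h2
      · have h3 : primeIdx n a < m := by rwa [primeIdx_lt_comm]
        have h4 := (braidOn_below (q := q) hq h3 hm).rev
        rw [primeIdx_primeIdx, primeIdx_primeIdx] at h4
        exact h4.swap23 hq n3 (Ne.symm ha')
  have b1 := base.swap12 hq ha' (Ne.symm ha)
  have b2 := base.swap23 hq n2 ha'
  have b3 := p23 _ b1
  have b4 := p12 _ b2
  exact ⟨⟨b1, base, b2⟩, b3, b3.swap12 hq n2 ha', b4⟩

variable (n) (q)

/-- The braid relation for `T`. -/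
lemma braid_relation (hq : q ≠ 0) :
    op12 n (Tmat n q) * op23 n (Tmat n q) * op12 n (Tmat n q)
      = op23 n (Tmat n q) * op12 n (Tmat n q) * op23 n (Tmat n q) := by
  rw [← sub_eq_zero]
  change braidDefect n q = 0
  apply ext_e3
  intro a b c
  rw [Matrix.zero_mulVec]
  change BraidOn q a b c
  have hp : ∀ k a : Fin (2*n), BraidOn q a k (primeIdx n k) ∧ BraidOn q k a (primeIdx n k) ∧
      BraidOn q k (primeIdx n k) a := by
    intro k a
    rcases lt_or_gt_of_ne (primeIdx_ne n k) with h | h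
    · have h1 := (braidOn_pair (q := q) hq (primeIdx n k)
        (by rwa [primeIdx_primeIdx]) a).2
      rwa [primeIdx_primeIdx] at h1
    · exact (braidOn_pair hq k h a).1
  by_cases h1 : b = primeIdx n a
  · subst h1; exact (hp a c).2.2
  by_cases h2 : c = primeIdx n a
  · subst h2; exact (hp a b).2.1
  by_cases h3 : c = primeIdx n b
  · subst h3; exact (hp b a).1
  exact braidOn_generic hq h1 h2 h3

end braid

/-! ### The R-matrix as a baxterized braid operator -/

section rmatrix

variable {F : Type*} [Field F] (n : ℕ) (q : F)

/-- The polynomial form of `P R̄(u)`, with `P` the flip: the baxterization of the braid operator. -/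
def Rcheck (u : F) : Matrix (Fin (2*n) × Fin (2*n)) (Fin (2*n) × Fin (2*n)) F :=
  ((q - q⁻¹) * (u + q⁻¹ * nuVal n q)) • (1 : Matrix _ _ F)
    + ((u - 1) * (u + q⁻¹ * nuVal n q)) • Tmat n q
    + ((q - q⁻¹) * (q⁻¹ * nuVal n q) * (u - 1)) • Emat n q

lemma xiVal_eq (hq : q ≠ 0) : xiVal n q = -(q⁻¹ * nuVal n q) := by
  rw [xiVal, nuVal, ← _root_.zpow_neg_one, ← zpow_add₀ hq]
  congr 2
  ring

/-- The exceptional block of the R-matrix. -/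
lemma aEnt_eq (hq : q ≠ 0) (xi u : F) (i j : Fin (2*n)) :
    q * aEnt n q xi u i j = (q - q⁻¹) * (u - xi) * (if i = primeIdx n j then 1 else 0)
      + (u - 1) * (u - xi) * tEnt n q i (primeIdx n j)
      - (q - q⁻¹) * xi * (u - 1) * (cWt n q i * cWt n q (primeIdx n j)) := by
  have h1 : q ^ (barIdx n i - barIdx n j) = cWt n q i * cWt n q (primeIdx n j) := by
    rw [cWt_primeIdx, zpow_sub₀ hq, cWt, cWt, div_eq_mul_inv]
  have h2 : q ^ (-2 : ℤ) = q⁻¹ * q⁻¹ := by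
    rw [show (-2 : ℤ) = -1 + -1 by norm_num, zpow_add₀ hq, _root_.zpow_neg_one]
  have hij : ∀ i, primeIdx n i ≠ i := primeIdx_ne n
  rw [aEnt, tEnt, primeIdx_primeIdx, h1, h2]
  by_cases h : i = j
  · subst h
    have h3 : cWt n q i * cWt n q (primeIdx n i) = 1 := by
      rw [cWt_primeIdx, mul_inv_cancel₀ (cWt_ne n q hq i)]
    simp only [if_true, lt_irrefl, if_false, (hij i).symm, h3]
    field_simp
    ring
  · rcases lt_or_gt_of_ne h with h3 | h3
    · have h4 : i = primeIdx n j → ¬ j < primeIdx n j := fun h => by rw [← h]; exact h3.not_gt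
      simp only [if_neg h, if_pos (Fin.lt_def.1 h3), if_neg h3.not_gt]
      by_cases h5 : i = primeIdx n j
      · simp only [if_pos h5, if_neg (h4 h5)]
        field_simp
        ring
      · simp only [if_neg h5]
        field_simp
        ring
    · have h4 : i = primeIdx n j → j < primeIdx n j := fun h => by rw [← h]; exact h3
      simp only [if_neg h, if_neg (Fin.lt_def.not.1 h3.not_gt), if_pos h3]
      by_cases h5 : i = primeIdx n j
      · simp only [if_pos h5, if_pos (h4 h5)]
        field_simp
        ring
      · simp only [if_neg h5]
        field_simp
        ring

/-- `R̄(u)` is, up to the flip and a scalar factor, the baxterized braid operator. -/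
lemma Rbar_eq (hq : q ≠ 0) {u : F} (h1 : q * u - q⁻¹ ≠ 0) (h3 : u - xiVal n q ≠ 0)
    (p r : Fin (2*n) × Fin (2*n)) :
    Rbar n q (xiVal n q) u p r
      = ((q * u - q⁻¹) * (u - xiVal n q))⁻¹ * Rcheck n q u (p.2, p.1) r := by
  obtain ⟨p1, p2⟩ := p
  obtain ⟨r1, r2⟩ := r
  have h2 : u - q ^ (-2 : ℤ) = q⁻¹ * (q * u - q⁻¹) := by
    rw [show (-2 : ℤ) = -1 + -1 by norm_num, zpow_add₀ hq, _root_.zpow_neg_one]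
    field_simp
  have hxi : q⁻¹ * nuVal n q = -xiVal n q := by rw [xiVal_eq n q hq, neg_neg]
  have hij := primeIdx_ne n
  simp only [Rbar, Rcheck, hxi, h2, Matrix.add_apply, Matrix.smul_apply, smul_eq_mul,
    Matrix.one_apply, Tmat, Emat, Prod.mk.injEq]
  generalize xiVal n q = xi at *
  by_cases hr : r2 = primeIdx n r1
  · have hr' : r1 = primeIdx n r2 := (eq_primeIdx_comm n r2 r1).1 hr
    by_cases hp : p1 = primeIdx n p2
    · have ha := aEnt_eq n q hq xi u p2 r2
      rw [← hr'] at ha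
      have hp3 : ¬ (p1 = p2) := fun h => hij p2 (by rw [← hp, h])
      have hone : (p2 = r1 ∧ p1 = r2) ↔ p2 = r1 := by
        refine ⟨fun h => h.1, fun h => ⟨h, ?_⟩⟩
        rw [hp, hr, h]
      simp only [hp3, false_and, hp.symm, hr'.symm, hr.symm, ne_eq, not_true_eq_false, and_false,
        and_self, if_true, if_false, hone]
      have ha' : aEnt n q xi u p2 r2 = q⁻¹ * ((q - q⁻¹) * (u - xi) * (if p2 = r1 then 1 else 0)
          + (u - 1) * (u - xi) * tEnt n q p2 r1
          - (q - q⁻¹) * xi * (u - 1) * (cWt n q p2 * cWt n q r1)) := by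
        rw [← ha, inv_mul_cancel_left₀ hq]
      rw [ha', mul_assoc q⁻¹ (q * u - q⁻¹), mul_div_mul_left _ _ (inv_ne_zero hq), div_eq_inv_mul]
      ring
    · have hz : ¬ (p2 = r1 ∧ p1 = r2) := fun h => hp (by rw [h.1, h.2, hr])
      have hz' : ¬ (p1 = r1 ∧ p2 = r2) := fun h => hp (by rw [h.1, h.2, hr'])
      have c1 : ¬ (p1 = p2 ∧ p1 = r1 ∧ p1 = r2) := fun h => hz' ⟨h.2.1, h.1.symm.trans h.2.2⟩
      have c2 : ∀ Q, ¬ (p1 = r1 ∧ p2 = r2 ∧ Q) := fun Q h => hz' ⟨h.1, h.2.1⟩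
      have c3 : ∀ Q, ¬ (p1 = r2 ∧ p2 = r1 ∧ Q) := fun Q h => hz ⟨h.2.1, h.1⟩
      simp only [hr.symm, hp, hz, c1, c2, c3, false_and, if_true, if_false, mul_zero, add_zero]
  · have hr' : ¬ r1 = primeIdx n r2 := fun h => hr ((eq_primeIdx_comm n r1 r2).1 h)
    rw [eq_inv_mul_iff_mul_eq₀ (mul_ne_zero h1 h3)]
    simp only [hr, hr', and_false, if_false, add_zero, mul_zero]
    by_cases hrr : r1 = r2
    · subst hrr
      by_cases hp : p1 = r1 ∧ p2 = r1
      · obtain ⟨rfl, rfl⟩ := hp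
        simp only [if_true, and_self, ne_eq, not_true_eq_false, false_and, and_false, if_false,
          lt_irrefl, add_zero, mul_one]
        field_simp
        ring
      · have hz : ¬ (p2 = r1 ∧ p1 = r1) := fun h => hp ⟨h.2, h.1⟩
        have c1 : ¬ (p1 = p2 ∧ p1 = r1 ∧ p1 = r1) := fun h => hp ⟨h.2.1, h.1.symm.trans h.2.2⟩
        have c2 : ∀ Q, ¬ (p1 = r1 ∧ p2 = r1 ∧ Q) := fun Q h => hp ⟨h.1, h.2.1⟩
        simp only [hz, c1, c2, if_true, if_false, mul_zero, add_zero]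
    · have c1 : ¬ (p1 = p2 ∧ p1 = r1 ∧ p1 = r2) := fun h => hrr (h.2.1.symm.trans h.2.2)
      by_cases hA : p1 = r1 ∧ p2 = r2
      · obtain ⟨rfl, rfl⟩ := hA
        have hrr' : ¬ p2 = p1 := Ne.symm hrr
        simp only [hrr, hrr', hr', ne_eq, not_false_eq_true, and_self, false_and, if_true,
          if_false, add_zero, zero_add, mul_zero, mul_one]
        generalize q * u - q⁻¹ = D at h1 ⊢
        field_simp
        ring
      · have c2 : ∀ Q, ¬ (p1 = r1 ∧ p2 = r2 ∧ Q) := fun Q h => hA ⟨h.1, h.2.1⟩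
        by_cases hB : p1 = r2 ∧ p2 = r1
        · obtain ⟨rfl, rfl⟩ := hB
          have hrr' : ¬ p1 = p2 := Ne.symm hrr
          rcases lt_or_gt_of_ne hrr' with h | h
          · simp only [hrr, hrr', hr, ne_eq, not_false_eq_true, and_self, and_true, true_and,
              if_true, if_false, add_zero, zero_add, mul_one, h,
              Fin.lt_def.1 h, (Fin.lt_def.1 h).not_gt]
            generalize q * u - q⁻¹ = D at h1 ⊢
            field_simp
            ring
          · simp only [hrr, hrr', hr, ne_eq, not_false_eq_true, and_self, and_true, true_and,
              if_true, if_false, add_zero, zero_add, mul_zero, mul_one, h.not_gt,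
              Fin.lt_def.1 h, (Fin.lt_def.1 h).not_gt]
            generalize q * u - q⁻¹ = D at h1 ⊢
            field_simp
            ring
        · have c3 : ∀ Q, ¬ (p1 = r2 ∧ p2 = r1 ∧ Q) := fun Q h => hB ⟨h.1, h.2.1⟩
          have hA' : ¬ (p2 = r2 ∧ p1 = r1) := fun h => hA ⟨h.2, h.1⟩
          have hB' : ¬ (p2 = r1 ∧ p1 = r2) := fun h => hB ⟨h.2, h.1⟩
          simp only [hrr, hA', hB', c1, c2, c3, if_false, mul_zero, add_zero]

variable {n}

/-- Relabelling of the factors turns a Yang–Baxter product into a braid product. -/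
lemma yb_left (R S : F → Matrix (Fin (2*n) × Fin (2*n)) (Fin (2*n) × Fin (2*n)) F) (x y w : F)
    (hx : ∀ p r, R x p r = S x (p.2, p.1) r) (hy : ∀ p r, R y p r = S y (p.2, p.1) r)
    (hw : ∀ p r, R w p r = S w (p.2, p.1) r) :
    op12 n (R x) * op13 n (R w) * op23 n (R y)
      = (op23 n (S x) * op12 n (S w) * op23 n (S y)).submatrix
          (fun p => (p.2.2, p.2.1, p.1)) id := by
  let e1 : Fin (2*n) × Fin (2*n) × Fin (2*n) ≃ Fin (2*n) × Fin (2*n) × Fin (2*n) :=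
    ⟨fun p => (p.2.2, p.1, p.2.1), fun p => (p.2.1, p.2.2, p.1), fun _ => rfl, fun _ => rfl⟩
  let e2 : Fin (2*n) × Fin (2*n) × Fin (2*n) ≃ Fin (2*n) × Fin (2*n) × Fin (2*n) :=
    ⟨fun p => (p.1, p.2.2, p.2.1), fun p => (p.1, p.2.2, p.2.1), fun _ => rfl, fun _ => rfl⟩
  rw [← Matrix.submatrix_mul_equiv _ _ _ e2, ← Matrix.submatrix_mul_equiv _ _ _ e1]
  congr 1
  · congr 1
    · ext p r
      simp [op12, op23, e1, hx, mul_comm]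
    · ext p r
      simp [op13, op12, e1, e2, hw]
  · ext p r
    simp [op23, e2, hy]

lemma yb_right (R S : F → Matrix (Fin (2*n) × Fin (2*n)) (Fin (2*n) × Fin (2*n)) F) (x y w : F)
    (hx : ∀ p r, R x p r = S x (p.2, p.1) r) (hy : ∀ p r, R y p r = S y (p.2, p.1) r)
    (hw : ∀ p r, R w p r = S w (p.2, p.1) r) :
    op23 n (R y) * op13 n (R w) * op12 n (R x)
      = (op12 n (S y) * op23 n (S w) * op12 n (S x)).submatrix
          (fun p => (p.2.2, p.2.1, p.1)) id := by
  let e1 : Fin (2*n) × Fin (2*n) × Fin (2*n) ≃ Fin (2*n) × Fin (2*n) × Fin (2*n) :=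
    ⟨fun p => (p.2.1, p.2.2, p.1), fun p => (p.2.2, p.1, p.2.1), fun _ => rfl, fun _ => rfl⟩
  let e2 : Fin (2*n) × Fin (2*n) × Fin (2*n) ≃ Fin (2*n) × Fin (2*n) × Fin (2*n) :=
    ⟨fun p => (p.2.1, p.1, p.2.2), fun p => (p.2.1, p.1, p.2.2), fun _ => rfl, fun _ => rfl⟩
  rw [← Matrix.submatrix_mul_equiv _ _ _ e2, ← Matrix.submatrix_mul_equiv _ _ _ e1]
  congr 1
  · congr 1
    · ext p r
      simp [op12, op23, e1, hy, mul_comm]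
    · ext p r
      simp [op13, op23, e1, e2, hw, mul_comm]
  · ext p r
    simp [op12, e2, hx]

variable (n)

/-- The Yang–Baxter equation in braid form for the baxterized operator. -/
lemma Rcheck_braid (hn : 2 ≤ n) (hq : q ≠ 0) (x y : F) :
    op23 n (Rcheck n q x) * op12 n (Rcheck n q (x * y)) * op23 n (Rcheck n q y)
      = op12 n (Rcheck n q y) * op23 n (Rcheck n q (x * y)) * op12 n (Rcheck n q x) :=
  bmw_baxter (op12 n (Tmat n q)) (op23 n (Tmat n q)) (op12 n (Emat n q)) (op23 n (Emat n q))
    q (q - q⁻¹) (nuVal n q) (∑ i, cWt n q i ^ 2) x y hq rfl (zpow_ne_zero _ hq)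
    (delta_eq n q hq hn) (sq_one n q hq) (sq_two n q hq) (te_one n q hq) (te_two n q hq)
    (et_one n q hq) (et_two n q hq) (ee_one n q) (ee_two n q) (eee_one n q hq) (eee_two n q hq)
    (tee_one n q hq) (tee_two n q hq) (eet_one n q hq) (eet_two n q hq) (tte_one n q hq)
    (tte_two n q hq) (ett_one n q hq) (ett_two n q hq) (braid_relation n q hq)
    (fun u => op12 n (Rcheck n q u)) (fun u => op23 n (Rcheck n q u))
    (fun u => by simp only [Rcheck, op12_add, op12_smul, op12_one])
    (fun u => by simp only [Rcheck, op23_add, op23_smul, op23_one])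

end rmatrix

/-- The Yang–Baxter equation
`R̄₁₂(x) R̄₁₃(xy) R̄₂₃(y) = R̄₂₃(y) R̄₁₃(xy) R̄₁₂(x)`. -/
theorem Rbar_yang_baxter
    {F : Type*} [Field F] (n : ℕ) (hn : 2 ≤ n) (q x y : F) (hq : q ≠ 0)
    (hx1 : q * x - q⁻¹ ≠ 0) (hx2 : x - q ^ (-2 : ℤ) ≠ 0) (hx3 : x - xiVal n q ≠ 0)
    (hy1 : q * y - q⁻¹ ≠ 0) (hy2 : y - q ^ (-2 : ℤ) ≠ 0) (hy3 : y - xiVal n q ≠ 0)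
    (hxy1 : q * (x * y) - q⁻¹ ≠ 0) (hxy2 : x * y - q ^ (-2 : ℤ) ≠ 0)
    (hxy3 : x * y - xiVal n q ≠ 0) :
    op12 n (Rbar n q (xiVal n q) x) * op13 n (Rbar n q (xiVal n q) (x * y))
        * op23 n (Rbar n q (xiVal n q) y)
      = op23 n (Rbar n q (xiVal n q) y) * op13 n (Rbar n q (xiVal n q) (x * y))
        * op12 n (Rbar n q (xiVal n q) x) := by
  let S : F → Matrix (Fin (2*n) × Fin (2*n)) (Fin (2*n) × Fin (2*n)) F := fun u =>
    ((q * u - q⁻¹) * (u - xiVal n q))⁻¹ • Rcheck n q u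
  rw [yb_left (Rbar n q (xiVal n q)) S x y (x * y) (Rbar_eq n q hq hx1 hx3)
      (Rbar_eq n q hq hy1 hy3) (Rbar_eq n q hq hxy1 hxy3),
    yb_right (Rbar n q (xiVal n q)) S x y (x * y) (Rbar_eq n q hq hx1 hx3)
      (Rbar_eq n q hq hy1 hy3) (Rbar_eq n q hq hxy1 hxy3)]
  congr 1
  simp only [S, op12_smul, op23_smul, smul_mul_assoc, mul_smul_comm, smul_smul,
    Rcheck_braid n q hn hq]
  congr 1
  ring

end
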